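/- Let T be a tiling of ℝ^d such that 𝒫(T) is admissible and linearly repetitive, let R ≥ 0, and suppose that for each tiling S ∈ Ω(𝒫(T)) a function A(S) : S × S → ℝ is given satisfying: (symmetry) A(S)(x,y) = A(S)(y,x); (finite range) A(S)(x,y) = 0 whenever dist(x,y) ≥ R; and (invariance) whenever S, S' ∈ Ω(𝒫(T)), x,y ∈ S, and t ∈ ℝ^d are such that x+t, y+t ∈ S' and the translate by t of the pattern {s ∈ S : dist(s,{x,y}) ≤ R} equals {s' ∈ S' : dist(s',{x+t,y+t}) ≤ R}, one has A(S')(x+t,y+t) = A(S)(x,y). Then for every λ ∈ ℝ there exists k(λ) ∈ ℝ such that k_λ^S(B) → k(λ) as ω(B) → ∞, uniformly in S: for every ε > 0 there is r' > 0 such that |k_λ^S(B) − k(λ)| < ε for every tiling S ∈ Ω(𝒫(T)) and every box B with ω(B) ≥ r'. -/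

import Mathlib

open Metric Set Filter MeasureTheory Topology

noncomputable section

/-- Points of `ℝ^d`. -/
abbrev Pt (d : ℕ) := EuclideanSpace ℝ (Fin d)

variable (d : ℕ)

/-- A tile: a subset of `ℝ^d` homeomorphic to the closed unit ball. -/
def IsTile (m : Set (Pt d)) : Prop :=
  Nonempty (m ≃ₜ (Metric.closedBall (0 : Pt d) 1))

/-- A pattern: a finite nonempty collection of tiles whose interiors are pairwise disjoint. -/
def IsPattern (M : Set (Set (Pt d))) : Prop :=
  M.Finite ∧ M.Nonempty ∧ (∀ m ∈ M, IsTile d m) ∧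
    M.Pairwise fun m m' => interior m ∩ interior m' = ∅

/-- A tiling of `ℝ^d`: a collection of tiles with pairwise disjoint interiors covering `ℝ^d`. -/
def IsTiling (T : Set (Set (Pt d))) : Prop :=
  (∀ m ∈ T, IsTile d m) ∧
    (T.Pairwise fun m m' => interior m ∩ interior m' = ∅) ∧ ⋃₀ T = Set.univ

/-- Translation of a pattern by `t`. -/
def patTrans (t : Pt d) (M : Set (Set (Pt d))) : Set (Set (Pt d)) :=
  (fun m => (fun x => x + t) '' m) '' M

/-- Support (underlying set) of a pattern. -/
def supp (M : Set (Set (Pt d))) : Set (Pt d) := ⋃₀ M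

/-- Inner radius: the largest `r` such that some closed ball of radius `r` fits inside `s(M)`. -/
def rIn (M : Set (Set (Pt d))) : ℝ :=
  sSup {r : ℝ | ∃ x : Pt d, Metric.closedBall x r ⊆ supp d M}

/-- Outer radius: the smallest `r` such that some closed ball of radius `r` contains `s(M)`. -/
def rOut (M : Set (Set (Pt d))) : ℝ :=
  sInf {r : ℝ | ∃ x : Pt d, supp d M ⊆ Metric.closedBall x r}

/-- The pattern class of `P` is a subpattern of (the class of) `Q`:
some translate of `P` is contained in `Q`. -/
def SubpatternClass (P Q : Set (Set (Pt d))) : Prop :=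
  ∃ t : Pt d, patTrans d t P ⊆ Q

/-- A set of abstract patterns is modelled as a translation-closed set `Ps` of concrete
patterns (the union of the pattern classes).  `Admissible` encodes conditions
(i)–(iii) of Definition 2.1. -/
structure Admissible (Ps : Set (Set (Set (Pt d)))) : Prop where
  pattern : ∀ P ∈ Ps, IsPattern d P
  transClosed : ∀ (t : Pt d), ∀ P ∈ Ps, patTrans d t P ∈ Ps
  subClosed : ∀ P ∈ Ps, ∀ Q : Set (Set (Pt d)), IsPattern d Q → Q ⊆ P → Q ∈ Ps
  tileBounds : ∃ rmin rmax : ℝ, 0 < rmin ∧ rmin ≤ rmax ∧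
    ∀ m : Set (Pt d), ({m} : Set (Set (Pt d))) ∈ Ps →
      rmin ≤ rIn d {m} ∧ rIn d {m} ≤ rOut d {m} ∧ rOut d {m} ≤ rmax
  extend : ∀ P ∈ Ps, (0 : Pt d) ∈ supp d P → ∀ r : ℝ, 0 < r →
    ∃ Q ∈ Ps, P ⊆ Q ∧ Metric.closedBall (0 : Pt d) r ⊆ supp d Q

/-- Linear repetitivity of a (translation-closed) set of patterns. -/
def LinearlyRepetitive (Ps : Set (Set (Set (Pt d)))) : Prop :=
  ∃ c : ℝ, 0 < c ∧ ∀ P ∈ Ps, 1 ≤ rOut d P →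
    ∀ Q ∈ Ps, c * rOut d P ≤ rIn d Q → SubpatternClass d P Q

/-- The box determined by corner functions `a b : Fin d → ℝ`. -/
def boxSet (a b : Fin d → ℝ) : Set (Pt d) := {x | ∀ j, x j ∈ Set.Icc (a j) (b j)}

/-- `B` is a box. -/
def IsBox (B : Set (Pt d)) : Prop :=
  ∃ a b : Fin d → ℝ, (∀ j, a j < b j) ∧ B = boxSet d a b

/-- `B` is an `r`-box: all side lengths lie in `[r, 2r]`. -/
def IsRBox (r : ℝ) (B : Set (Pt d)) : Prop :=
  ∃ a b : Fin d → ℝ, (∀ j, a j < b j) ∧ B = boxSet d a b ∧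
    ∀ j, r ≤ b j - a j ∧ b j - a j ≤ 2 * r

/-- Width of a box: the minimum of its side lengths. -/
def widthOf (B : Set (Pt d)) : ℝ :=
  ⨅ j : Fin d, (sSup ((fun x : Pt d => x j) '' B) - sInf ((fun x : Pt d => x j) '' B))

/-- Volume of a subset of `ℝ^d`. -/
def volOf (B : Set (Pt d)) : ℝ := (volume B).toReal

/-- Restriction `M ∩ B` of a pattern or tiling `M` to `B`. -/
def patRestrict (M : Set (Set (Pt d))) (B : Set (Pt d)) : Set (Set (Pt d)) :=
  {s | ∃ m ∈ M, (m ∩ interior B).Nonempty ∧ s = m ∩ B}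

/-- The set `Ps_B` of box-patterns derived from `Ps` (concrete representatives). -/
def BoxPatterns (Ps : Set (Set (Set (Pt d)))) : Set (Set (Set (Pt d))) :=
  {Q | ∃ P ∈ Ps, ∃ B : Set (Pt d), IsBox d B ∧ B ⊆ supp d P ∧ Q = patRestrict d P B}

/-- The set `Ps(r)` of `r`-patterns derived from `Ps`. -/
def RPatterns (Ps : Set (Set (Set (Pt d)))) (r : ℝ) : Set (Set (Set (Pt d))) :=
  {Q | ∃ P ∈ Ps, ∃ B : Set (Pt d), IsRBox d r B ∧ B ⊆ supp d P ∧ Q = patRestrict d P B}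

/-- Width of a box-pattern. -/
def patWidth (M : Set (Set (Pt d))) : ℝ := widthOf d (supp d M)

/-- Volume of a box-pattern. -/
def patVol (M : Set (Set (Pt d))) : ℝ := volOf d (supp d M)

/-- A subadditive function on `Ps_B`, with constants `dF, rF` and error function `cF`.
`F` is defined on concrete patterns and is translation-invariant (i.e. well defined on
pattern classes). -/
structure SubadditiveOn (Ps : Set (Set (Set (Pt d)))) (F : Set (Set (Pt d)) → ℝ)
    (dF rF : ℝ) (cF : ℝ → ℝ) : Prop where
  invariant : ∀ (t : Pt d), ∀ M ∈ BoxPatterns d Ps, F (patTrans d t M) = F M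
  dF_nonneg : 0 ≤ dF
  rF_nonneg : 0 ≤ rF
  cF_anti : ∀ r s : ℝ, rF ≤ r → r ≤ s → cF s ≤ cF r
  cF_lim : Tendsto cF atTop (nhds 0)
  subadd : ∀ M ∈ BoxPatterns d Ps, ∀ (n : ℕ) (Bj : Fin n → Set (Pt d)),
    (∀ j, IsBox d (Bj j)) →
    (∀ i j, i ≠ j → interior (Bj i) ∩ interior (Bj j) = ∅) →
    (⋃ j, Bj j) = supp d M →
    (∀ j, rF ≤ widthOf d (Bj j)) →
    F M ≤ (∑ j, F (patRestrict d M (Bj j))) +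
      ∑ j, cF (widthOf d (Bj j)) * volOf d (Bj j)
  bound : ∀ M ∈ BoxPatterns d Ps, |F M| ≤ dF * patVol d M

/-- The upper mean `F⁺(r)`. -/
def Fplus (Ps : Set (Set (Set (Pt d)))) (F : Set (Set (Pt d)) → ℝ) (r : ℝ) : ℝ :=
  sSup ((fun P => F P / patVol d P) '' RPatterns d Ps r)

/-- The lower mean `F⁻(r)`. -/
def Fminus (Ps : Set (Set (Set (Pt d)))) (F : Set (Set (Pt d)) → ℝ) (r : ℝ) : ℝ :=
  sInf ((fun P => F P / patVol d P) '' RPatterns d Ps r)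


/-- The set of pattern classes of finite subpatterns of a tiling `T`
(as a translation-closed set of concrete patterns). -/
def patternClassesOf (T : Set (Set (Pt d))) : Set (Set (Set (Pt d))) :=
  {M | IsPattern d M ∧ ∃ t : Pt d, patTrans d t M ⊆ T}

/-- The tiling space `Ω(𝒫)`: all tilings all of whose finite subpattern classes lie in `Ps`. -/
def TilingsOf (Ps : Set (Set (Set (Pt d)))) : Set (Set (Set (Pt d))) :=
  {T | IsTiling d T ∧ ∀ M : Set (Set (Pt d)), IsPattern d M → M ⊆ T → M ∈ Ps}

/-- The tiles of `S` meeting the interior of `B`. -/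
def tilesMeeting (S : Set (Set (Pt d))) (B : Set (Pt d)) : Set (Set (Pt d)) :=
  {x | x ∈ S ∧ (x ∩ interior B).Nonempty}

/-- The pattern of tiles of `S` within distance `R` of the pair of tiles `x, y`. -/
def nbhdPattern (S : Set (Set (Pt d))) (x y : Set (Pt d)) (R : ℝ) :
    Set (Set (Pt d)) :=
  {s | s ∈ S ∧ ∃ p ∈ s, ∃ q ∈ x ∪ y, dist p q ≤ R}

/-- The number of eigenvalues `≤ lam` (with multiplicity) of a real symmetric matrix. -/
noncomputable def evCountBelow {n : Type} [Fintype n] [DecidableEq n]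
    (M : Matrix n n ℝ) (lam : ℝ) : ℕ :=
  if h : M.IsHermitian then Fintype.card {i // h.eigenvalues i ≤ lam} else 0

/-- The finite-volume eigenvalue counting function
`k_λ^S(B) = #{eigenvalues of A(S)|_B that are ≤ λ} / |B|`, where `A(S)|_B` is the matrix
of `A(S)` restricted to the tiles of `S` meeting the interior of `B`.  (For the operators
considered here this set of tiles is finite, so the `dite` takes its first branch.) -/
noncomputable def idsVal (S : Set (Set (Pt d)))
    (A : Set (Set (Pt d)) → Set (Pt d) → Set (Pt d) → ℝ)
    (B : Set (Pt d)) (lam : ℝ) : ℝ :=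
  haveI := Classical.propDecidable ((tilesMeeting d S B).Finite)
  if h : (tilesMeeting d S B).Finite then
    haveI := h.fintype
    haveI : DecidableEq (tilesMeeting d S B) := Classical.decEq _
    ((evCountBelow (Matrix.of fun x y : tilesMeeting d S B => A S x.1 y.1) lam : ℕ) : ℝ) /
      volOf d B
  else 0

section LinAlg

open Matrix

theorem herm_spec {n : Type} [Fintype n] [DecidableEq n] (M : Matrix n n ℝ)
    (h : M.IsHermitian) : ∃ U : Matrix n n ℝ, Uᵀ * U = 1 ∧ U * Uᵀ = 1 ∧
      (∀ v : n → ℝ, v ⬝ᵥ (M *ᵥ v) = ∑ i, h.eigenvalues i * ((Uᵀ *ᵥ v) i) ^ 2) ∧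
      (∀ v : n → ℝ, v ⬝ᵥ v = ∑ i, ((Uᵀ *ᵥ v) i) ^ 2) := by
  let U : Matrix n n ℝ := (h.eigenvectorUnitary : Matrix n n ℝ)
  have h1 : Uᵀ * U = 1 := by
    have := (Matrix.mem_unitaryGroup_iff' (A := U)).1 h.eigenvectorUnitary.2
    simpa [star_eq_conjTranspose, conjTranspose_eq_transpose_of_trivial] using this
  have h2 : U * Uᵀ = 1 := by
    have := (Matrix.mem_unitaryGroup_iff (A := U)).1 h.eigenvectorUnitary.2
    simpa [star_eq_conjTranspose, conjTranspose_eq_transpose_of_trivial] using this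
  have h3 : M = U * diagonal h.eigenvalues * Uᵀ := by
    have := h.spectral_theorem
    rw [Unitary.conjStarAlgAut_apply] at this
    simpa [U, star_eq_conjTranspose, conjTranspose_eq_transpose_of_trivial, Function.comp_def] using this
  refine ⟨U, h1, h2, ?_, ?_⟩
  · intro v
    have : v ⬝ᵥ (M *ᵥ v) = v ⬝ᵥ ((U * diagonal h.eigenvalues * Uᵀ) *ᵥ v) := by rw [← h3]
    rw [this, mul_assoc, ← mulVec_mulVec, ← mulVec_mulVec, dotProduct_mulVec, ← mulVec_transpose]
    simp only [dotProduct, mulVec_diagonal]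
    refine Finset.sum_congr rfl fun i _ => ?_
    ring
  · intro v
    have : v ⬝ᵥ v = v ⬝ᵥ ((U * Uᵀ) *ᵥ v) := by rw [h2, one_mulVec]
    rw [this, ← mulVec_mulVec, dotProduct_mulVec, ← mulVec_transpose]
    simp only [dotProduct]
    refine Finset.sum_congr rfl fun i _ => ?_
    ring

theorem evCount_ge {n : Type} [Fintype n] [DecidableEq n] (M : Matrix n n ℝ)
    (h : M.IsHermitian) (lam : ℝ) (V : Submodule ℝ (n → ℝ))
    (hV : ∀ v ∈ V, v ⬝ᵥ (M *ᵥ v) ≤ lam * (v ⬝ᵥ v)) :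
    Module.finrank ℝ V ≤ evCountBelow M lam := by
  classical
  obtain ⟨U, h1, h2, h3, h4⟩ := herm_spec M h
  let f : V →ₗ[ℝ] ({i // h.eigenvalues i ≤ lam} → ℝ) :=
    { toFun := fun v i => (Uᵀ *ᵥ (v : n → ℝ)) i.1
      map_add' := by intro x y; ext i; simp [mulVec_add]
      map_smul' := by intro c x; ext i; simp [mulVec_smul] }
  have hf : Function.Injective f := by
    rw [← LinearMap.ker_eq_bot, LinearMap.ker_eq_bot']
    rintro ⟨v, hv⟩ hfv
    have hz : ∀ i, h.eigenvalues i ≤ lam → (Uᵀ *ᵥ v) i = 0 := fun i hi => congrFun hfv ⟨i, hi⟩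
    have hle := hV v hv
    rw [h3, h4, Finset.mul_sum] at hle
    have hnn : ∀ i ∈ Finset.univ, 0 ≤ (h.eigenvalues i - lam) * ((Uᵀ *ᵥ v) i) ^ 2 := by
      intro i _
      rcases le_or_gt (h.eigenvalues i) lam with hi | hi
      · rw [hz i hi]; simp
      · have : 0 ≤ h.eigenvalues i - lam := by linarith
        positivity
    have hs : ∑ i, (h.eigenvalues i - lam) * ((Uᵀ *ᵥ v) i) ^ 2 = 0 := by
      apply le_antisymm _ (Finset.sum_nonneg hnn)
      simp only [sub_mul, Finset.sum_sub_distrib]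
      linarith
    have hall := (Finset.sum_eq_zero_iff_of_nonneg hnn).1 hs
    have hw : Uᵀ *ᵥ v = 0 := by
      ext i
      rcases le_or_gt (h.eigenvalues i) lam with hi | hi
      · exact hz i hi
      · have := hall i (Finset.mem_univ i)
        rcases mul_eq_zero.1 this with h0 | h0
        · linarith
        · simpa using h0
    have : v = 0 := by
      have : U *ᵥ (Uᵀ *ᵥ v) = 0 := by rw [hw, mulVec_zero]
      rwa [mulVec_mulVec, h2, one_mulVec] at this
    exact Subtype.ext this
  have := LinearMap.finrank_le_finrank_of_injective hf
  rw [evCountBelow, dif_pos h]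
  simpa using this

theorem evCount_exists {n : Type} [Fintype n] [DecidableEq n] (M : Matrix n n ℝ)
    (h : M.IsHermitian) (lam : ℝ) : ∃ V : Submodule ℝ (n → ℝ),
    (∀ v ∈ V, v ⬝ᵥ (M *ᵥ v) ≤ lam * (v ⬝ᵥ v)) ∧
    Module.finrank ℝ V = evCountBelow M lam := by
  classical
  obtain ⟨U, h1, h2, h3, h4⟩ := herm_spec M h
  let g : ({i // h.eigenvalues i ≤ lam} → ℝ) →ₗ[ℝ] (n → ℝ) :=
    { toFun := fun c i => if hi : h.eigenvalues i ≤ lam then c ⟨i, hi⟩ else 0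
      map_add' := by intro x y; ext i; by_cases hi : h.eigenvalues i ≤ lam <;> simp [hi]
      map_smul' := by intro c x; ext i; by_cases hi : h.eigenvalues i ≤ lam <;> simp [hi] }
  have hg : Function.Injective g := by
    intro x y hxy
    ext ⟨i, hi⟩
    have := congrFun hxy i
    simpa [g, hi] using this
  have hU : Function.Injective (U.mulVecLin) := by
    intro x y hxy
    have : Uᵀ *ᵥ (U *ᵥ x) = Uᵀ *ᵥ (U *ᵥ y) := by
      simp only [mulVecLin_apply] at hxy
      rw [hxy]
    simpa [mulVec_mulVec, h1] using this
  refine ⟨LinearMap.range (U.mulVecLin ∘ₗ g), ?_, ?_⟩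
  · rintro _ ⟨c, rfl⟩
    have hc : Uᵀ *ᵥ ((U.mulVecLin ∘ₗ g) c) = g c := by
      simp [mulVec_mulVec, h1]
    rw [h3, h4, hc, Finset.mul_sum]
    refine Finset.sum_le_sum fun i _ => ?_
    by_cases hi : h.eigenvalues i ≤ lam
    · exact mul_le_mul_of_nonneg_right hi (sq_nonneg _)
    · simp [g, hi]
  · rw [LinearMap.finrank_range_of_inj (by rw [LinearMap.coe_comp]; exact hU.comp hg), evCountBelow, dif_pos h]
    simp

theorem quad_extend {n m : Type} [Fintype n] [Fintype m] [DecidableEq n] [DecidableEq m]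
    (M : Matrix n n ℝ) (M' : Matrix m m ℝ) (e : n → m) (he : Function.Injective e)
    (hM : ∀ i j, M i j = M' (e i) (e j)) (w : m → ℝ) (hw : ∀ j, j ∉ Set.range e → w j = 0) :
    w ⬝ᵥ (M' *ᵥ w) = (w ∘ e) ⬝ᵥ (M *ᵥ (w ∘ e)) ∧ w ⬝ᵥ w = (w ∘ e) ⬝ᵥ (w ∘ e) := by
  have key : ∀ F : m → ℝ, (∀ j, j ∉ Set.range e → F j = 0) → ∑ j, F j = ∑ i, F (e i) := by
    intro F hF
    have hm := Finset.sum_map Finset.univ ⟨e, he⟩ F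
    simp only [Function.Embedding.coeFn_mk] at hm
    rw [← hm]
    symm
    apply Finset.sum_subset (Finset.subset_univ _)
    intro j _ hj
    apply hF
    simpa using hj
  constructor
  · simp only [dotProduct, mulVec]
    rw [key _ (fun j hj => by rw [hw j hj, zero_mul])]
    refine Finset.sum_congr rfl fun i _ => ?_
    rw [key _ (fun j hj => by rw [hw j hj, mul_zero])]
    simp [hM]
  · simp only [dotProduct]
    rw [key _ (fun j hj => by rw [hw j hj, mul_zero])]
    rfl

theorem evCount_le_of_inj {n m : Type} [Fintype n] [Fintype m] [DecidableEq n] [DecidableEq m]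
    (M : Matrix n n ℝ) (M' : Matrix m m ℝ) (h : M.IsHermitian) (h' : M'.IsHermitian)
    (e : n → m) (he : Function.Injective e)
    (hM : ∀ i j, M i j = M' (e i) (e j)) (lam : ℝ) :
    evCountBelow M lam ≤ evCountBelow M' lam := by
  classical
  obtain ⟨V, hV, hd⟩ := evCount_exists M h lam
  let E : (n → ℝ) →ₗ[ℝ] (m → ℝ) := Function.ExtendByZero.linearMap ℝ e
  have hE : ∀ v, E v ∘ e = v := by
    intro v; ext i
    simp [E, he.extend_apply]
  have hEi : Function.Injective E := by
    intro x y hxy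
    rw [← hE x, ← hE y, hxy]
  rw [← hd, ← LinearMap.finrank_range_of_inj (f := E ∘ₗ V.subtype)
    (by rw [LinearMap.coe_comp]; exact hEi.comp V.injective_subtype)]
  apply evCount_ge M' h'
  rintro _ ⟨v, rfl⟩
  have hz : ∀ j, j ∉ Set.range e → E v j = 0 := by
    intro j hj
    have : ¬ ∃ a, e a = j := hj
    simp [E, Function.extend_apply' _ _ _ this]
  obtain ⟨q1, q2⟩ := quad_extend M M' e he hM (E v) hz
  rw [hE] at q1 q2
  change E v ⬝ᵥ (M' *ᵥ E v) ≤ lam * (E v ⬝ᵥ E v)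
  rw [q1, q2]
  exact hV v v.2

theorem evCount_ge_of_inj {n m : Type} [Fintype n] [Fintype m] [DecidableEq n] [DecidableEq m]
    (M : Matrix n n ℝ) (M' : Matrix m m ℝ) (h : M.IsHermitian) (h' : M'.IsHermitian)
    (e : n → m) (he : Function.Injective e)
    (hM : ∀ i j, M i j = M' (e i) (e j)) (lam : ℝ) :
    evCountBelow M' lam + Fintype.card n ≤ evCountBelow M lam + Fintype.card m := by
  classical
  obtain ⟨V, hV, hd⟩ := evCount_exists M' h' lam
  let r : V →ₗ[ℝ] ({j // j ∉ Set.range e} → ℝ) :=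
    (LinearMap.funLeft ℝ ℝ (Subtype.val : {j // j ∉ Set.range e} → m)) ∘ₗ V.subtype
  let g : LinearMap.ker r →ₗ[ℝ] (n → ℝ) :=
    (LinearMap.funLeft ℝ ℝ e) ∘ₗ V.subtype ∘ₗ (LinearMap.ker r).subtype
  have hker : ∀ v : LinearMap.ker r, ∀ j, j ∉ Set.range e → (v.1.1 : m → ℝ) j = 0 := by
    intro v j hj
    exact congrFun (LinearMap.mem_ker.1 v.2) ⟨j, hj⟩
  have hg : Function.Injective g := by
    intro v w hv
    apply Subtype.ext; apply Subtype.ext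
    ext j
    by_cases hj : j ∈ Set.range e
    · obtain ⟨i, rfl⟩ := hj
      exact congrFun hv i
    · rw [hker v j hj, hker w j hj]
  have h1 := LinearMap.finrank_range_add_finrank_ker r
  have h2 : Module.finrank ℝ (LinearMap.range g) ≤ evCountBelow M lam := by
    apply evCount_ge M h
    rintro _ ⟨v, rfl⟩
    obtain ⟨q1, q2⟩ := quad_extend M M' e he hM v.1.1 (hker v)
    change (v.1.1 ∘ e) ⬝ᵥ (M *ᵥ (v.1.1 ∘ e)) ≤ lam * ((v.1.1 ∘ e) ⬝ᵥ (v.1.1 ∘ e))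
    rw [← q1, ← q2]
    exact hV _ v.1.2
  rw [LinearMap.finrank_range_of_inj hg] at h2
  have h3 : Module.finrank ℝ (LinearMap.range r) ≤ Fintype.card {j // j ∉ Set.range e} := by
    have := Submodule.finrank_le (LinearMap.range r)
    simpa only [Module.finrank_fintype_fun_eq_card] using this
  have h4 : Fintype.card {j // j ∉ Set.range e} + Fintype.card n = Fintype.card m := by
    have h5 := Fintype.card_subtype_compl (fun j => j ∈ Set.range e)
    have h6 : Fintype.card {j // j ∈ Set.range e} = Fintype.card n :=
      (Fintype.card_congr (Equiv.ofInjective e he)).symm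
    have h7 : Fintype.card {j // j ∈ Set.range e} ≤ Fintype.card m := Fintype.card_subtype_le _
    rw [h5, h6]
    omega
  omega

theorem evCount_eq_roots {n : Type} [Fintype n] [DecidableEq n] (M : Matrix n n ℝ)
    (h : M.IsHermitian) (lam : ℝ) :
    evCountBelow M lam = (M.charpoly.roots.filter (fun x => x ≤ lam)).card := by
  classical
  rw [evCountBelow, dif_pos h, h.roots_charpoly_eq_eigenvalues, Multiset.filter_map,
    Multiset.card_map, Fintype.card_subtype]
  rfl

theorem evCount_blocks {n m : Type} [Fintype n] [Fintype m] [DecidableEq n] [DecidableEq m]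
    (M : Matrix n n ℝ) (M' : Matrix m m ℝ) (h : M.IsHermitian) (h' : M'.IsHermitian) (lam : ℝ) :
    evCountBelow (Matrix.fromBlocks M 0 0 M') lam = evCountBelow M lam + evCountBelow M' lam := by
  have hb : (Matrix.fromBlocks M 0 0 M').IsHermitian := by
    apply Matrix.IsHermitian.fromBlocks h (by simp) h'
  rw [evCount_eq_roots _ h, evCount_eq_roots _ h', evCount_eq_roots _ hb,
    Matrix.charpoly_fromBlocks_zero₁₂, Polynomial.roots_mul, Multiset.filter_add, Multiset.card_add]
  exact mul_ne_zero (Matrix.charpoly_monic _).ne_zero (Matrix.charpoly_monic _).ne_zero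

end LinAlg

/-- counting function on a set of indices -/
def NX {ι : Type} (a : ι → ι → ℝ) (lam : ℝ) (X : Set ι) : ℕ :=
  haveI := Classical.propDecidable X.Finite
  if h : X.Finite then
    haveI := h.fintype
    haveI : DecidableEq X := Classical.decEq _
    evCountBelow (Matrix.of fun x y : X => a x.1 y.1) lam
  else 0

theorem idsVal_eq (d : ℕ) (S : Set (Set (Pt d)))
    (A : Set (Set (Pt d)) → Set (Pt d) → Set (Pt d) → ℝ)
    (B : Set (Pt d)) (lam : ℝ) :
    idsVal d S A B lam = (NX (A S) lam (tilesMeeting d S B) : ℝ) / volOf d B := by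
  unfold idsVal NX
  split_ifs <;> simp

theorem NX_comp {ι : Type} (a a' : ι → ι → ℝ) (lam : ℝ) (X Y : Set ι)
    (hX : X.Finite) (hY : Y.Finite) (f : ι → ι) (hf : Set.InjOn f X) (hXY : Set.MapsTo f X Y)
    (haa : ∀ x ∈ X, ∀ y ∈ X, a' (f x) (f y) = a x y)
    (hs : ∀ x ∈ Y, ∀ y ∈ Y, a' x y = a' y x) :
    NX a lam X ≤ NX a' lam Y ∧ NX a' lam Y + X.ncard ≤ NX a lam X + Y.ncard := by
  classical
  unfold NX
  rw [dif_pos hX, dif_pos hY]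
  let _ := hX.fintype
  let _ := hY.fintype
  have h' : (Matrix.of fun x y : Y => a' x.1 y.1).IsHermitian := by
    ext x y
    simp [hs x.1 x.2 y.1 y.2]
  have h : (Matrix.of fun x y : X => a x.1 y.1).IsHermitian := by
    ext x y
    simp only [Matrix.conjTranspose_apply, Matrix.of_apply, star_trivial]
    rw [← haa _ y.2 _ x.2, ← haa _ x.2 _ y.2, hs _ (hXY x.2) _ (hXY y.2)]
  have he : Function.Injective (fun x : X => (⟨f x.1, hXY x.2⟩ : Y)) := by
    intro x y hxy
    exact Subtype.ext (hf x.2 y.2 (Subtype.ext_iff.1 hxy))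
  have hM : ∀ i j : X, (Matrix.of fun x y : X => a x.1 y.1) i j =
    (Matrix.of fun x y : Y => a' x.1 y.1) ⟨f i.1, hXY i.2⟩ ⟨f j.1, hXY j.2⟩ := by
    intro i j
    simp [haa i.1 i.2 j.1 j.2]
  have e1 := evCount_le_of_inj _ _ h h' _ he hM lam
  have e2 := evCount_ge_of_inj _ _ h h' _ he hM lam
  rw [← Nat.card_coe_set_eq, ← Nat.card_coe_set_eq, Nat.card_eq_fintype_card,
    Nat.card_eq_fintype_card]
  refine ⟨?_, ?_⟩
  · convert e1
  · convert e2

theorem NX_subset {ι : Type} (a : ι → ι → ℝ) (lam : ℝ) (X Y : Set ι)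
    (hXY : X ⊆ Y) (hY : Y.Finite) (hs : ∀ x ∈ Y, ∀ y ∈ Y, a x y = a y x) :
    NX a lam X ≤ NX a lam Y ∧ NX a lam Y ≤ NX a lam X + (Y \ X).ncard := by
  have hX := hY.subset hXY
  obtain ⟨h1, h2⟩ := NX_comp a a lam X Y hX hY id (Set.injOn_id _) hXY (by simp) hs
  refine ⟨h1, ?_⟩
  have := Set.ncard_sdiff_add_ncard_of_subset hXY hY
  omega

theorem NX_union {ι : Type} (a : ι → ι → ℝ) (lam : ℝ) (X Y : Set ι)
    (hX : X.Finite) (hY : Y.Finite) (hd : Disjoint X Y)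
    (hs : ∀ x ∈ X ∪ Y, ∀ y ∈ X ∪ Y, a x y = a y x)
    (h0 : ∀ x ∈ X, ∀ y ∈ Y, a x y = 0) :
    NX a lam (X ∪ Y) = NX a lam X + NX a lam Y := by
  classical
  have hXY := hX.union hY
  unfold NX
  rw [dif_pos hX, dif_pos hY, dif_pos hXY]
  let _ := hX.fintype
  let _ := hY.fintype
  let _ := hXY.fintype
  have h1 : (Matrix.of fun x y : X => a x.1 y.1).IsHermitian := by
    ext x y
    simp [hs x.1 (Or.inl x.2) y.1 (Or.inl y.2)]
  have h2 : (Matrix.of fun x y : Y => a x.1 y.1).IsHermitian := by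
    ext x y
    simp [hs x.1 (Or.inr x.2) y.1 (Or.inr y.2)]
  have h3 : (Matrix.of fun x y : ↑(X ∪ Y) => a x.1 y.1).IsHermitian := by
    ext x y
    simp [hs x.1 x.2 y.1 y.2]
  have hb : (Matrix.fromBlocks (Matrix.of fun x y : X => a x.1 y.1) 0 0
      (Matrix.of fun x y : Y => a x.1 y.1)).IsHermitian :=
    Matrix.IsHermitian.fromBlocks h1 (by simp) h2
  let e : X ⊕ Y → ↑(X ∪ Y) := Sum.elim (fun x => ⟨x.1, Or.inl x.2⟩) (fun y => ⟨y.1, Or.inr y.2⟩)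
  have hdd : ∀ x ∈ X, ∀ y ∈ Y, x ≠ y := fun x hx y hy => Set.disjoint_iff_forall_ne.1 hd hx hy
  have he : Function.Bijective e := by
    constructor
    · rintro (x | x) (y | y) hxy
      · simpa [e, Subtype.ext_iff] using hxy
      · exact absurd (Subtype.ext_iff.1 hxy) (hdd _ x.2 _ y.2)
      · exact absurd (Subtype.ext_iff.1 hxy).symm (hdd _ y.2 _ x.2)
      · simpa [e, Subtype.ext_iff] using hxy
    · rintro ⟨x, hx | hx⟩
      · exact ⟨Sum.inl ⟨x, hx⟩, rfl⟩
      · exact ⟨Sum.inr ⟨x, hx⟩, rfl⟩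
  have hM : ∀ i j : X ⊕ Y, (Matrix.fromBlocks (Matrix.of fun x y : X => a x.1 y.1) 0 0
      (Matrix.of fun x y : Y => a x.1 y.1)) i j =
      (Matrix.of fun x y : ↑(X ∪ Y) => a x.1 y.1) (e i) (e j) := by
    rintro (x | x) (y | y)
    · simp [e]
    · simp [e, h0 x.1 x.2 y.1 y.2]
    · simp [e, hs x.1 (Or.inr x.2) y.1 (Or.inl y.2), h0 y.1 y.2 x.1 x.2]
    · simp [e]
  have e1 := evCount_le_of_inj _ _ hb h3 e he.1 hM lam
  have e2 := evCount_ge_of_inj _ _ hb h3 e he.1 hM lam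
  have e3 := Fintype.card_of_bijective he
  have e4 := evCount_blocks _ _ h1 h2 lam
  have e5 : evCountBelow (Matrix.of fun x y : ↑(X ∪ Y) => a x.1 y.1) lam =
    evCountBelow (Matrix.of fun x y : X => a x.1 y.1) lam +
      evCountBelow (Matrix.of fun x y : Y => a x.1 y.1) lam := by omega
  convert e5

theorem NX_empty {ι : Type} (a : ι → ι → ℝ) (lam : ℝ) : NX a lam (∅ : Set ι) = 0 := by
  have h := NX_union a lam ∅ ∅ (Set.finite_empty) Set.finite_empty (by simp) (by simp) (by simp)
  simp only [Set.union_empty] at h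
  omega

theorem NX_biUnion {ι J : Type} (a : ι → ι → ℝ) (lam : ℝ) (I : Finset J) (X : J → Set ι)
    (hX : ∀ i ∈ I, (X i).Finite) (hd : ∀ i ∈ I, ∀ j ∈ I, i ≠ j → Disjoint (X i) (X j))
    (hs : ∀ i ∈ I, ∀ j ∈ I, ∀ x ∈ X i, ∀ y ∈ X j, a x y = a y x)
    (h0 : ∀ i ∈ I, ∀ j ∈ I, i ≠ j → ∀ x ∈ X i, ∀ y ∈ X j, a x y = 0) :
    NX a lam (⋃ i ∈ I, X i) = ∑ i ∈ I, NX a lam (X i) := by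
  classical
  induction I using Finset.induction_on with
  | empty => simp [NX_empty]
  | insert i I hi ih =>
    have ih' := ih (fun j hj => hX j (Finset.mem_insert_of_mem hj))
      (fun j hj k hk => hd j (Finset.mem_insert_of_mem hj) k (Finset.mem_insert_of_mem hk))
      (fun j hj k hk => hs j (Finset.mem_insert_of_mem hj) k (Finset.mem_insert_of_mem hk))
      (fun j hj k hk => h0 j (Finset.mem_insert_of_mem hj) k (Finset.mem_insert_of_mem hk))
    rw [Finset.set_biUnion_insert, Finset.sum_insert hi, ← ih']
    have hne : ∀ j ∈ I, i ≠ j := fun j hj h => hi (h ▸ hj)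
    have hmi := Finset.mem_insert_self i I
    apply NX_union
    · exact hX i hmi
    · exact Set.Finite.biUnion I.finite_toSet (fun j hj => hX j (Finset.mem_insert_of_mem hj))
    · rw [Set.disjoint_iUnion₂_right]
      intro j hj
      exact hd i hmi j (Finset.mem_insert_of_mem hj) (hne j hj)
    · have hmem : ∀ x ∈ X i ∪ ⋃ j ∈ I, X j, ∃ j ∈ insert i I, x ∈ X j := by
        intro x hx
        rw [← Finset.set_biUnion_insert] at hx
        simpa using hx
      intro x hx y hy
      obtain ⟨j, hj, hxj⟩ := hmem x hx
      obtain ⟨k, hk, hyk⟩ := hmem y hy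
      exact hs j hj k hk x hxj y hyk
    · intro x hx y hy
      simp only [Set.mem_iUnion] at hy
      obtain ⟨j, hj, hyj⟩ := hy
      exact h0 i hmi j (Finset.mem_insert_of_mem hj) (hne j hj) x hx y hyj

section Geom

/-- open box -/
def ob (d : ℕ) (a b : Fin d → ℝ) : Set (Pt d) := {x | ∀ j, x j ∈ Set.Ioo (a j) (b j)}

/-- volume of a box -/
def bV {d : ℕ} (a b : Fin d → ℝ) : ℝ := ∏ j, (b j - a j)

theorem boxSet_eq (d : ℕ) (a b : Fin d → ℝ) :
    boxSet d a b = (@WithLp.ofLp 2 (Fin d → ℝ)) ⁻¹' (Set.pi Set.univ fun j => Set.Icc (a j) (b j)) := by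
  ext x; simp only [boxSet, Set.mem_ofPred_eq, Set.mem_preimage, Set.mem_pi, Set.mem_univ, true_imp_iff]

theorem ob_eq (d : ℕ) (a b : Fin d → ℝ) :
    ob d a b = (@WithLp.ofLp 2 (Fin d → ℝ)) ⁻¹' (Set.pi Set.univ fun j => Set.Ioo (a j) (b j)) := by
  ext x; simp [ob, Set.mem_pi]

theorem interior_boxSet (d : ℕ) (a b : Fin d → ℝ) : interior (boxSet d a b) = ob d a b := by
  rw [boxSet_eq, ob_eq]
  have := (PiLp.homeomorph 2 (fun _ : Fin d => ℝ)).preimage_interior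
    (Set.pi Set.univ fun j => Set.Icc (a j) (b j))
  rw [interior_pi_set Set.finite_univ] at this
  simp only [interior_Icc] at this
  exact this.symm

theorem isOpen_ob (d : ℕ) (a b : Fin d → ℝ) : IsOpen (ob d a b) := by
  rw [← interior_boxSet]; exact isOpen_interior

theorem isClosed_boxSet (d : ℕ) (a b : Fin d → ℝ) : IsClosed (boxSet d a b) := by
  rw [boxSet_eq]
  exact (isClosed_set_pi fun j _ => isClosed_Icc).preimage (PiLp.continuous_ofLp 2 _)

theorem volume_boxSet (d : ℕ) (a b : Fin d → ℝ) :
    volume (boxSet d a b) = ∏ j, ENNReal.ofReal (b j - a j) := by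
  rw [boxSet_eq, (PiLp.volume_preserving_ofLp (Fin d)).measure_preimage
    (MeasurableSet.univ_pi fun j => measurableSet_Icc).nullMeasurableSet]
  rw [volume_pi_pi]
  simp only [Real.volume_Icc]

theorem volume_ob (d : ℕ) (a b : Fin d → ℝ) :
    volume (ob d a b) = ∏ j, ENNReal.ofReal (b j - a j) := by
  rw [ob_eq, (PiLp.volume_preserving_ofLp (Fin d)).measure_preimage
    (MeasurableSet.univ_pi fun j => measurableSet_Ioo).nullMeasurableSet]
  simp [volume_pi_pi]

theorem toReal_box {d : ℕ} (a b : Fin d → ℝ) (h : ∀ j, a j ≤ b j) :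
    (∏ j, ENNReal.ofReal (b j - a j)).toReal = bV a b := by
  rw [ENNReal.toReal_prod, bV]
  refine Finset.prod_congr rfl fun j _ => ?_
  rw [ENNReal.toReal_ofReal]; linarith [h j]

theorem volOf_boxSet (d : ℕ) (a b : Fin d → ℝ) (h : ∀ j, a j ≤ b j) :
    volOf d (boxSet d a b) = bV a b := by
  rw [volOf, volume_boxSet, toReal_box a b h]

theorem image_boxSet (d : ℕ) (a b : Fin d → ℝ) (h : ∀ j, a j ≤ b j) (j : Fin d) :
    (fun x : Pt d => x j) '' (boxSet d a b) = Set.Icc (a j) (b j) := by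
  ext y
  constructor
  · rintro ⟨x, hx, rfl⟩; exact hx j
  · intro hy
    refine ⟨WithLp.toLp 2 (Function.update a j y), ?_, by simp⟩
    intro i
    by_cases hij : i = j
    · subst hij; simpa using hy
    · simp [Function.update_of_ne hij, h i]

theorem side_of_width (d : ℕ) (a b : Fin d → ℝ) (h : ∀ j, a j < b j) (w : ℝ)
    (hw : w ≤ widthOf d (boxSet d a b)) (j : Fin d) : w ≤ b j - a j := by
  refine hw.trans ?_
  unfold widthOf
  refine (ciInf_le (Set.finite_range _).bddBelow j).trans ?_
  rw [image_boxSet d a b (fun j => (h j).le), csSup_Icc (h j).le, csInf_Icc (h j).le]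

theorem coord_dist {d : ℕ} (p q : Pt d) (j : Fin d) : |p j - q j| ≤ dist p q := by
  rw [dist_eq_norm]
  have := PiLp.norm_apply_le (p - q) j
  simpa using this

/-- nice tilings -/
structure Good (d : ℕ) (r0 rho : ℝ) (S : Set (Set (Pt d))) : Prop where
  cover : ∀ p : Pt d, ∃ x ∈ S, p ∈ x
  disj : S.Pairwise fun m m' => interior m ∩ interior m' = ∅
  closed : ∀ x ∈ S, IsClosed x
  inner : ∀ x ∈ S, ∃ c : Pt d, Metric.ball c r0 ⊆ x
  diam : ∀ x ∈ S, ∀ p ∈ x, ∀ q ∈ x, dist p q ≤ rho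

/-- volume of a small ball -/
def v0 (d : ℕ) (r0 : ℝ) : ℝ := (volume (Metric.ball (0 : Pt d) r0)).toReal

theorem v0_pos (d : ℕ) (r0 : ℝ) (h : 0 < r0) : 0 < v0 d r0 := by
  apply ENNReal.toReal_pos
  · exact (Metric.measure_ball_pos volume _ h).ne'
  · exact measure_ball_lt_top.ne

theorem count_le {d : ℕ} {r0 rho : ℝ} {S : Set (Set (Pt d))} (hS : Good d r0 rho S) (hr0 : 0 < r0)
    (X : Set (Set (Pt d))) (hX : X ⊆ S) (G : Set (Pt d)) (hG : volume G ≠ ⊤)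
    (hXG : ∀ x ∈ X, x ⊆ G) : X.Finite ∧ (X.ncard : ℝ) * v0 d r0 ≤ (volume G).toReal := by
  classical
  have hv := v0_pos d r0 hr0
  have key : ∀ F : Finset (Set (Pt d)), (↑F : Set (Set (Pt d))) ⊆ X →
      (F.card : ℝ) * v0 d r0 ≤ (volume G).toReal := by
    intro F hF
    choose! c hc using hS.inner
    have hsub : (⋃ x ∈ F, Metric.ball (c x) r0) ⊆ G := by
      intro p hp
      simp only [Set.mem_iUnion] at hp
      obtain ⟨x, hx, hpx⟩ := hp
      exact hXG x (hF hx) (hc x (hX (hF hx)) hpx)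
    have hm : volume (⋃ x ∈ F, Metric.ball (c x) r0) = ∑ x ∈ F, volume (Metric.ball (c x) r0) := by
      apply measure_biUnion_finset
      · intro x hx y hy hxy
        have := hS.disj (hX (hF hx)) (hX (hF hy)) hxy
        refine Set.disjoint_left.2 fun p hp hq => ?_
        have h1 : p ∈ interior x := interior_maximal (hc x (hX (hF hx))) Metric.isOpen_ball hp
        have h2 : p ∈ interior y := interior_maximal (hc y (hX (hF hy))) Metric.isOpen_ball hq
        have : p ∈ interior x ∩ interior y := ⟨h1, h2⟩
        simp_all
      · intro x _; exact measurableSet_ball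
    have h1 : ∑ x ∈ F, volume (Metric.ball (c x) r0) ≤ volume G := hm ▸ measure_mono hsub
    have h2 : ∀ x ∈ F, volume (Metric.ball (c x) r0) = volume (Metric.ball (0 : Pt d) r0) :=
      fun x _ => by rw [Measure.addHaar_ball_center]
    rw [Finset.sum_congr rfl h2, Finset.sum_const, nsmul_eq_mul] at h1
    have h3 := ENNReal.toReal_mono hG h1
    simpa [ENNReal.toReal_mul, v0] using h3
  have hfin : X.Finite := by
    by_contra hinf
    obtain ⟨n, hn⟩ := exists_nat_gt ((volume G).toReal / v0 d r0)
    obtain ⟨F, hF, hcard⟩ := Set.Infinite.exists_subset_card_eq hinf n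
    have := key F hF
    rw [hcard] at this
    rw [div_lt_iff₀ hv] at hn
    linarith
  refine ⟨hfin, ?_⟩
  have := key hfin.toFinset (by simp)
  rwa [← Set.ncard_eq_toFinset_card X hfin] at this

theorem vol_union_ob {d : ℕ} {J : Type} (I : Finset J) (al be : J → Fin d → ℝ)
    (hle : ∀ i ∈ I, ∀ j, al i j ≤ be i j)
    (hdis : ∀ i ∈ I, ∀ k ∈ I, i ≠ k → Disjoint (ob d (al i) (be i)) (ob d (al k) (be k))) :
    (volume (⋃ i ∈ I, ob d (al i) (be i))).toReal = ∑ i ∈ I, bV (al i) (be i) ∧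
    volume (⋃ i ∈ I, ob d (al i) (be i)) ≠ ⊤ := by
  have hm : volume (⋃ i ∈ I, ob d (al i) (be i)) = ∑ i ∈ I, volume (ob d (al i) (be i)) := by
    apply measure_biUnion_finset
    · intro x hx y hy hxy
      exact hdis x hx y hy hxy
    · intro x _; exact (isOpen_ob d _ _).measurableSet
  have hft : ∀ i ∈ I, volume (ob d (al i) (be i)) ≠ ⊤ := by
    intro i _
    rw [volume_ob]
    exact ENNReal.prod_ne_top fun j _ => ENNReal.ofReal_ne_top
  rw [hm]
  refine ⟨?_, (ENNReal.sum_lt_top.2 fun i hi => (hft i hi).lt_top).ne⟩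
  rw [ENNReal.toReal_sum hft]
  refine Finset.sum_congr rfl fun i hi => ?_
  rw [volume_ob, toReal_box _ _ (hle i hi)]

theorem vol_box_ne_top (d : ℕ) (a b : Fin d → ℝ) : volume (boxSet d a b) ≠ ⊤ := by
  rw [volume_boxSet]
  exact ENNReal.prod_ne_top fun j _ => ENNReal.ofReal_ne_top

theorem sum_vol_le {d : ℕ} {J : Type} (I : Finset J) (al be : J → Fin d → ℝ) (a b : Fin d → ℝ)
    (hab : ∀ j, a j ≤ b j)
    (hle : ∀ i ∈ I, ∀ j, al i j ≤ be i j)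
    (hdis : ∀ i ∈ I, ∀ k ∈ I, i ≠ k → Disjoint (ob d (al i) (be i)) (ob d (al k) (be k)))
    (hsub : ∀ i ∈ I, ob d (al i) (be i) ⊆ boxSet d a b) :
    ∑ i ∈ I, bV (al i) (be i) ≤ bV a b := by
  rw [← (vol_union_ob I al be hle hdis).1, ← toReal_box a b hab, ← volume_boxSet]
  apply ENNReal.toReal_mono (vol_box_ne_top d a b)
  apply measure_mono
  exact Set.iUnion₂_subset hsub

theorem count_diff {d : ℕ} {r0 rho : ℝ} {S : Set (Set (Pt d))} (hS : Good d r0 rho S) (hr0 : 0 < r0)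
    {J : Type} (I : Finset J) (al be : J → Fin d → ℝ) (a b : Fin d → ℝ)
    (hab : ∀ j, a j ≤ b j)
    (hle : ∀ i ∈ I, ∀ j, al i j ≤ be i j)
    (hdis : ∀ i ∈ I, ∀ k ∈ I, i ≠ k → Disjoint (ob d (al i) (be i)) (ob d (al k) (be k)))
    (hsub : ∀ i ∈ I, ob d (al i) (be i) ⊆ boxSet d a b)
    (X : Set (Set (Pt d))) (hX : X ⊆ S) (hXB : ∀ x ∈ X, x ⊆ boxSet d a b)
    (hXd : ∀ x ∈ X, ∀ i ∈ I, Disjoint x (ob d (al i) (be i))) :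
    (X.ncard : ℝ) * v0 d r0 ≤ bV a b - ∑ i ∈ I, bV (al i) (be i) := by
  have hU := vol_union_ob I al be hle hdis
  have hsub' : (⋃ i ∈ I, ob d (al i) (be i)) ⊆ boxSet d a b := Set.iUnion₂_subset hsub
  have hft := vol_box_ne_top d a b
  have hdf : volume (boxSet d a b \ ⋃ i ∈ I, ob d (al i) (be i)) =
      volume (boxSet d a b) - volume (⋃ i ∈ I, ob d (al i) (be i)) := by
    apply measure_sdiff hsub' _ hU.2
    exact (Finset.measurableSet_biUnion _ fun i _ => (isOpen_ob d _ _).measurableSet).nullMeasurableSet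
  have := (count_le hS hr0 X hX (boxSet d a b \ ⋃ i ∈ I, ob d (al i) (be i))
    (measure_ne_top_of_subset Set.sdiff_subset hft) (by
      intro x hx p hp
      refine ⟨hXB x hx hp, ?_⟩
      simp only [Set.mem_iUnion, not_exists]
      intro i hi hpi
      exact Set.disjoint_left.1 (hXd x hx i hi) hp hpi)).2
  rwa [hdf, ENNReal.toReal_sub_of_le (measure_mono hsub') hft, hU.1, volume_boxSet,
    toReal_box a b hab] at this

end Geom

section MainIneq

/-- number of eigenvalues for the box -/
def NB (d : ℕ) (F : Set (Pt d) → Set (Pt d) → ℝ) (lam : ℝ) (S : Set (Set (Pt d)))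
    (a b : Fin d → ℝ) : ℝ := (NX F lam (tilesMeeting d S (boxSet d a b)) : ℝ)

theorem mem_tm {d : ℕ} {S : Set (Set (Pt d))} {a b : Fin d → ℝ} {x : Set (Pt d)} :
    x ∈ tilesMeeting d S (boxSet d a b) ↔ x ∈ S ∧ (x ∩ ob d a b).Nonempty := by
  rw [tilesMeeting, interior_boxSet]; rfl

theorem tm_subset {d : ℕ} {r0 rho : ℝ} {S : Set (Set (Pt d))} (hS : Good d r0 rho S)
    {a b : Fin d → ℝ} {x : Set (Pt d)} (hx : x ∈ tilesMeeting d S (boxSet d a b)) :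
    x ⊆ boxSet d (fun j => a j - rho) (fun j => b j + rho) := by
  obtain ⟨hxS, p, hp, hpo⟩ := mem_tm.1 hx
  intro q hq j
  have h1 := coord_dist p q j
  have h2 := hS.diam x hxS p hp q hq
  have h3 := hpo j
  have h4 := abs_le.1 (h1.trans h2)
  exact ⟨by linarith [h3.1], by linarith [h3.2]⟩

theorem tm_finite {d : ℕ} {r0 rho : ℝ} {S : Set (Set (Pt d))} (hS : Good d r0 rho S)
    (hr0 : 0 < r0) (a b : Fin d → ℝ) : (tilesMeeting d S (boxSet d a b)).Finite :=
  (count_le hS hr0 _ (fun _ hx => hx.1) _ (vol_box_ne_top d _ _) fun _ hx => tm_subset hS hx).1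

/-- tiles deep inside the box -/
def deep (d : ℕ) (S : Set (Set (Pt d))) (R : ℝ) (a b : Fin d → ℝ) : Set (Set (Pt d)) :=
  {x | x ∈ S ∧ x ⊆ boxSet d (fun j => a j + (R + 1)) (fun j => b j - (R + 1))}

theorem not_deep {d : ℕ} {r0 rho : ℝ} {S : Set (Set (Pt d))} (hS : Good d r0 rho S)
    {R : ℝ} {a b : Fin d → ℝ} {x : Set (Pt d)} (hxS : x ∈ S) (hx : x ∉ deep d S R a b) :
    Disjoint x (ob d (fun j => a j + (R + 1 + rho)) (fun j => b j - (R + 1 + rho))) := by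
  rw [Set.disjoint_left]
  intro p hp hpo
  apply hx
  refine ⟨hxS, ?_⟩
  intro q hq j
  have h1 := coord_dist p q j
  have h2 := hS.diam x hxS p hp q hq
  have h3 := hpo j
  have h4 := abs_le.1 (h1.trans h2)
  exact ⟨by linarith [h3.1], by linarith [h3.2]⟩

set_option maxHeartbeats 1000000 in
theorem main_ineq {d : ℕ} {r0 rho : ℝ} {S : Set (Set (Pt d))} (hS : Good d r0 rho S)
    (hr0 : 0 < r0) (hrho : 0 ≤ rho) (R : ℝ) (hR : 0 ≤ R)
    (F : Set (Pt d) → Set (Pt d) → ℝ) (lam : ℝ)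
    (hsym : ∀ x ∈ S, ∀ y ∈ S, F x y = F y x)
    (hfin : ∀ x ∈ S, ∀ y ∈ S, (∀ p ∈ x, ∀ q ∈ y, R ≤ dist p q) → F x y = 0)
    (a b : Fin d → ℝ) (hab : ∀ j, a j ≤ b j)
    {J : Type} (I : Finset J) (al be : J → Fin d → ℝ)
    (hla : ∀ i ∈ I, ∀ j, a j ≤ al i j) (hlb : ∀ i ∈ I, ∀ j, be i j ≤ b j)
    (hside : ∀ i ∈ I, ∀ j, 2 * (R + 1 + rho) ≤ be i j - al i j)
    (hdis : ∀ i ∈ I, ∀ k ∈ I, i ≠ k → Disjoint (ob d (al i) (be i)) (ob d (al k) (be k))) :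
    |NB d F lam S a b - ∑ i ∈ I, NB d F lam S (al i) (be i)| * v0 d r0 ≤
      bV (fun j => a j - rho) (fun j => b j + rho)
      - ∑ i ∈ I, bV (fun j => al i j + (R + 1 + rho)) (fun j => be i j - (R + 1 + rho))
      + ∑ i ∈ I, (bV (fun j => al i j - rho) (fun j => be i j + rho)
        - bV (fun j => al i j + (R + 1 + rho)) (fun j => be i j - (R + 1 + rho))) := by
  have hv := v0_pos d r0 hr0
  set X : J → Set (Set (Pt d)) := fun i => deep d S R (al i) (be i) with hXdef
  set Y := tilesMeeting d S (boxSet d a b) with hY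
  set Q : J → Set (Set (Pt d)) := fun i => tilesMeeting d S (boxSet d (al i) (be i)) with hQ
  have hne : ∀ x ∈ S, x.Nonempty := by
    intro x hx
    obtain ⟨c, hc⟩ := hS.inner x hx
    exact ⟨c, hc (Metric.mem_ball_self hr0)⟩
  have hdeepob : ∀ i, ∀ x ∈ X i, x ⊆ ob d (al i) (be i) := by
    intro i x hx p hp j
    have := hx.2 hp j
    exact ⟨by linarith [this.1], by linarith [this.2]⟩
  have hXQ : ∀ i, X i ⊆ Q i := by
    intro i x hx
    obtain ⟨p, hp⟩ := hne x hx.1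
    exact mem_tm.2 ⟨hx.1, p, hp, hdeepob i x hx hp⟩
  have hobB : ∀ i ∈ I, ob d (al i) (be i) ⊆ ob d a b := by
    intro i hi p hp j
    have := hp j
    exact ⟨by linarith [this.1, hla i hi j], by linarith [this.2, hlb i hi j]⟩
  have hXY : ∀ i ∈ I, X i ⊆ Y := by
    intro i hi x hx
    obtain ⟨p, hp⟩ := hne x hx.1
    exact mem_tm.2 ⟨hx.1, p, hp, hobB i hi (hdeepob i x hx hp)⟩
  have hYf : Y.Finite := tm_finite hS hr0 a b
  have hQf : ∀ i, (Q i).Finite := fun i => tm_finite hS hr0 _ _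
  have hUY : (⋃ i ∈ I, X i) ⊆ Y := Set.iUnion₂_subset hXY
  have hbi : NX F lam (⋃ i ∈ I, X i) = ∑ i ∈ I, NX F lam (X i) := by
    apply NX_biUnion
    · intro i _; exact (hQf i).subset (hXQ i)
    · intro i hi k hk hik
      rw [Set.disjoint_left]
      intro x hx hx'
      obtain ⟨p, hp⟩ := hne x hx.1
      exact Set.disjoint_left.1 (hdis i hi k hk hik) (hdeepob i x hx hp) (hdeepob k x hx' hp)
    · intro i _ k _ x hx y hy
      exact hsym x hx.1 y hy.1
    · intro i hi k hk hik x hx y hy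
      apply hfin x hx.1 y hy.1
      intro p hp q hq
      by_contra hlt
      push Not at hlt
      have hq1 := hdeepob k y hy hq
      have hq2 : q ∈ ob d (al i) (be i) := by
        intro j
        have h1 := hx.2 hp j
        have h2 := abs_le.1 ((coord_dist p q j).trans hlt.le)
        exact ⟨by linarith [h1.1], by linarith [h1.2]⟩
      exact Set.disjoint_left.1 (hdis i hi k hk hik) hq2 hq1
  have hbir : (NX F lam (⋃ i ∈ I, X i) : ℝ) = ∑ i ∈ I, (NX F lam (X i) : ℝ) := by
    rw [hbi]; push_cast; rfl
  obtain ⟨y1, y2⟩ := NX_subset F lam (⋃ i ∈ I, X i) Y hUY hYf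
    (fun x hx y hy => hsym x hx.1 y hy.1)
  have q12 : ∀ i, NX F lam (X i) ≤ NX F lam (Q i) ∧
      NX F lam (Q i) ≤ NX F lam (X i) + (Q i \ X i).ncard := fun i =>
    NX_subset F lam (X i) (Q i) (hXQ i) (hQf i) (fun x hx y hy => hsym x hx.1 y hy.1)
  have s1 : ∑ i ∈ I, (NX F lam (X i) : ℝ) ≤ ∑ i ∈ I, (NX F lam (Q i) : ℝ) :=
    Finset.sum_le_sum fun i _ => by exact_mod_cast (q12 i).1
  have s2 : ∑ i ∈ I, (NX F lam (Q i) : ℝ) ≤ ∑ i ∈ I, (NX F lam (X i) : ℝ)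
      + ∑ i ∈ I, ((Q i \ X i).ncard : ℝ) := by
    rw [← Finset.sum_add_distrib]
    exact Finset.sum_le_sum fun i _ => by exact_mod_cast (q12 i).2
  have y1' : (NX F lam (⋃ i ∈ I, X i) : ℝ) ≤ NX F lam Y := by exact_mod_cast y1
  have y2' : (NX F lam Y : ℝ) ≤ NX F lam (⋃ i ∈ I, X i) + ((Y \ ⋃ i ∈ I, X i).ncard : ℝ) := by
    exact_mod_cast y2
  have hsub1 : ∀ i ∈ I, ob d (fun j => al i j + (R + 1 + rho)) (fun j => be i j - (R + 1 + rho)) ⊆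
      ob d (al i) (be i) := by
    intro i _ p hp j
    have := hp j
    exact ⟨by linarith [this.1], by linarith [this.2]⟩
  have c1 : ((Y \ ⋃ i ∈ I, X i).ncard : ℝ) * v0 d r0 ≤
      bV (fun j => a j - rho) (fun j => b j + rho) -
      ∑ i ∈ I, bV (fun j => al i j + (R + 1 + rho)) (fun j => be i j - (R + 1 + rho)) := by
    apply count_diff hS hr0 I (fun i j => al i j + (R + 1 + rho)) (fun i j => be i j - (R + 1 + rho))
    · intro j; linarith [hab j]
    · intro i hi j; linarith [hside i hi j]
    · intro i hi k hk hik
      exact (hdis i hi k hk hik).mono (hsub1 i hi) (hsub1 k hk)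
    · intro i hi p hp j
      have := hobB i hi (hsub1 i hi hp) j
      exact ⟨by linarith [this.1], by linarith [this.2]⟩
    · intro x hx; exact hx.1.1
    · intro x hx; exact tm_subset hS hx.1
    · intro x hx i hi
      apply not_deep hS hx.1.1
      intro hxi
      exact hx.2 (Set.mem_biUnion hi hxi)
  have c2 : ∀ i ∈ I, ((Q i \ X i).ncard : ℝ) * v0 d r0 ≤
      bV (fun j => al i j - rho) (fun j => be i j + rho)
        - bV (fun j => al i j + (R + 1 + rho)) (fun j => be i j - (R + 1 + rho)) := by
    intro i hi
    have := count_diff hS hr0 ({()} : Finset Unit) (fun _ j => al i j + (R + 1 + rho))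
      (fun _ j => be i j - (R + 1 + rho)) (fun j => al i j - rho) (fun j => be i j + rho)
      (by intro j; linarith [hside i hi j])
      (by intro _ _ j; linarith [hside i hi j])
      (by intro i _ k _ h; exact absurd rfl h)
      (by
        intro _ _ p hp j
        have := (hsub1 i hi hp) j
        exact ⟨by linarith [this.1], by linarith [this.2]⟩)
      (Q i \ X i) (fun x hx => hx.1.1) (fun x hx => tm_subset hS hx.1)
      (fun x hx _ _ => not_deep hS hx.1.1 hx.2)
    simpa using this
  have c2s := Finset.sum_le_sum c2
  rw [← Finset.sum_mul] at c2s
  have habs : |NB d F lam S a b - ∑ i ∈ I, NB d F lam S (al i) (be i)| ≤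
      ((Y \ ⋃ i ∈ I, X i).ncard : ℝ) + ∑ i ∈ I, ((Q i \ X i).ncard : ℝ) := by
    have e1 : NB d F lam S a b = (NX F lam Y : ℝ) := rfl
    have e2 : ∑ i ∈ I, NB d F lam S (al i) (be i) = ∑ i ∈ I, (NX F lam (Q i) : ℝ) := rfl
    rw [e1, e2]
    have p1 : (0:ℝ) ≤ ((Y \ ⋃ i ∈ I, X i).ncard : ℝ) := Nat.cast_nonneg _
    have p2 : (0:ℝ) ≤ ∑ i ∈ I, ((Q i \ X i).ncard : ℝ) :=
      Finset.sum_nonneg fun i _ => Nat.cast_nonneg _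
    rw [abs_le]
    constructor <;> linarith
  have := mul_le_mul_of_nonneg_right habs hv.le
  linarith

end MainIneq

section Grid

/-- corner of the grid cell -/
def gc {d : ℕ} (o : Fin d → ℝ) (l : ℝ) (i : Fin d → ℤ) : Fin d → ℝ := fun j => o j + i j * l

/-- upper corner of the cube -/
def up {d : ℕ} (o : Fin d → ℝ) (l : ℝ) : Fin d → ℝ := fun j => o j + l

/-- grid cells in a box -/
def gI {d : ℕ} (a b o : Fin d → ℝ) (l : ℝ) : Finset (Fin d → ℤ) :=
  Fintype.piFinset fun j => Finset.Ico ⌈(a j - o j) / l⌉ ⌊(b j - o j) / l⌋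

theorem bV_up {d : ℕ} (o : Fin d → ℝ) (l : ℝ) : bV o (up o l) = l ^ d := by
  simp [bV, up]

theorem bV_nonneg {d : ℕ} (a b : Fin d → ℝ) (h : ∀ j, a j ≤ b j) : 0 ≤ bV a b :=
  Finset.prod_nonneg fun j _ => by linarith [h j]

theorem bV_pos {d : ℕ} (a b : Fin d → ℝ) (h : ∀ j, a j < b j) : 0 < bV a b :=
  Finset.prod_pos fun j _ => by linarith [h j]

theorem bV_expand {d : ℕ} (a b : Fin d → ℝ) (l r : ℝ) (hl : 0 < l) (hr : 0 ≤ r)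
    (h : ∀ j, l ≤ b j - a j) :
    bV (fun j => a j - r) (fun j => b j + r) ≤ (1 + 2 * r / l) ^ d * bV a b := by
  have : (1 + 2 * r / l) ^ d * bV a b = ∏ j, ((1 + 2 * r / l) * (b j - a j)) := by
    rw [Finset.prod_mul_distrib, bV]; simp
  rw [this, bV]
  apply Finset.prod_le_prod
  · intro j _; linarith [h j]
  · intro j _
    have h1 : 2 * r / l * l ≤ 2 * r / l * (b j - a j) :=
      mul_le_mul_of_nonneg_left (h j) (by positivity)
    have h2 : 2 * r / l * l = 2 * r := by field_simp
    nlinarith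

theorem bV_shrink {d : ℕ} (a b : Fin d → ℝ) (l r : ℝ) (hl : 0 < l) (hr : 0 ≤ r) (hrl : 2 * r ≤ l)
    (h : ∀ j, l ≤ b j - a j) :
    (1 - 2 * r / l) ^ d * bV a b ≤ ∏ j, (b j - a j - 2 * r) := by
  have : (1 - 2 * r / l) ^ d * bV a b = ∏ j, ((1 - 2 * r / l) * (b j - a j)) := by
    rw [Finset.prod_mul_distrib, bV]; simp
  rw [this]
  have h0 : 2 * r / l ≤ 1 := by rw [div_le_one hl]; exact hrl
  apply Finset.prod_le_prod
  · intro j _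
    apply mul_nonneg <;> linarith [h j]
  · intro j _
    have h1 : 2 * r / l * l ≤ 2 * r / l * (b j - a j) :=
      mul_le_mul_of_nonneg_left (h j) (by positivity)
    have h2 : 2 * r / l * l = 2 * r := by field_simp
    nlinarith

theorem eta_exists (d : ℕ) (r s eta : ℝ) (he : 0 < eta) :
    ∃ l0 : ℝ, 0 < l0 ∧ 2 * s ≤ l0 ∧ (1 + 2 * r / l0) ^ d ≤ 1 + eta ∧
      1 - eta ≤ (1 - 2 * s / l0) ^ d := by
  have t1 : Tendsto (fun l : ℝ => (1 + 2 * r / l) ^ d) atTop (𝓝 ((1 + 0) ^ d)) :=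
    (tendsto_const_nhds.add (tendsto_const_nhds.div_atTop tendsto_id)).pow d
  have t2 : Tendsto (fun l : ℝ => (1 - 2 * s / l) ^ d) atTop (𝓝 ((1 - 0) ^ d)) :=
    (tendsto_const_nhds.sub (tendsto_const_nhds.div_atTop tendsto_id)).pow d
  simp only [add_zero, sub_zero, one_pow] at t1 t2
  have e1 := t1.eventually (eventually_lt_nhds (show (1:ℝ) < 1 + eta by linarith))
  have e2 := t2.eventually (eventually_gt_nhds (show 1 - eta < (1:ℝ) by linarith))
  obtain ⟨l, h1, h2, h3, h4⟩ := (e1.and (e2.and ((eventually_gt_atTop 0).and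
    (eventually_ge_atTop (2 * s))))).exists
  exact ⟨l, h3, h4, h1.le, h2.le⟩

theorem gI_mem {d : ℕ} (a b o : Fin d → ℝ) (l : ℝ) (hl : 0 < l) (i : Fin d → ℤ) :
    i ∈ gI a b o l ↔ ∀ j, a j ≤ gc o l i j ∧ up (gc o l i) l j ≤ b j := by
  simp only [gI, Fintype.mem_piFinset, Finset.mem_Ico, gc, up]
  refine forall_congr' fun j => ?_
  rw [Int.ceil_le, div_le_iff₀ hl, ← Int.add_one_le_iff, Int.le_floor, le_div_iff₀ hl]
  push_cast
  constructor
  · rintro ⟨h1, h2⟩; constructor <;> linarith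
  · rintro ⟨h1, h2⟩; constructor <;> linarith

theorem gI_disj {d : ℕ} (o : Fin d → ℝ) (l : ℝ) (hl : 0 < l) (i k : Fin d → ℤ) (hik : i ≠ k) :
    Disjoint (ob d (gc o l i) (up (gc o l i) l)) (ob d (gc o l k) (up (gc o l k) l)) := by
  rw [Set.disjoint_left]
  intro p hp hq
  apply hik
  ext j
  have h1 := hp j
  have h2 := hq j
  simp only [gc, up, Set.mem_Ioo] at h1 h2
  have e1 : (i j : ℝ) < k j + 1 := by
    by_contra hcon
    push Not at hcon
    nlinarith
  have e2 : (k j : ℝ) < i j + 1 := by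
    by_contra hcon
    push Not at hcon
    nlinarith
  have e1' : i j < k j + 1 := by exact_mod_cast e1
  have e2' : k j < i j + 1 := by exact_mod_cast e2
  omega

theorem gI_card_ge {d : ℕ} (a b o : Fin d → ℝ) (l w : ℝ) (hl : 0 < l) (hw : 2 * l ≤ w)
    (h : ∀ j, w ≤ b j - a j) :
    (1 - 2 * l / w) ^ d * bV a b ≤ ((gI a b o l).card : ℝ) * l ^ d := by
  refine (bV_shrink a b w l (by linarith) hl.le hw h).trans ?_
  have : ((gI a b o l).card : ℝ) * l ^ d =
      ∏ j : Fin d, (((Finset.Ico ⌈(a j - o j) / l⌉ ⌊(b j - o j) / l⌋).card : ℝ) * l) := by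
    rw [Finset.prod_mul_distrib, gI, Fintype.card_piFinset]
    push_cast
    simp
  rw [this]
  apply Finset.prod_le_prod
  · intro j _; linarith [h j]
  · intro j _
    rw [Int.card_Ico]
    have h1 : ((⌊(b j - o j) / l⌋ - ⌈(a j - o j) / l⌉ : ℤ) : ℝ) ≤
        (((⌊(b j - o j) / l⌋ - ⌈(a j - o j) / l⌉).toNat : ℕ) : ℝ) := by
      exact_mod_cast Int.self_le_toNat _
    have h2 := Int.lt_floor_add_one ((b j - o j) / l)
    have h3 := Int.ceil_lt_add_one ((a j - o j) / l)
    push_cast at h1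
    have h4 : (b j - o j) / l - (a j - o j) / l - 2 ≤
       (((⌊(b j - o j) / l⌋ - ⌈(a j - o j) / l⌉).toNat : ℕ) : ℝ) := by linarith
    have h5 := mul_le_mul_of_nonneg_right h4 hl.le
    have h6 : ((b j - o j) / l - (a j - o j) / l - 2) * l = b j - a j - 2 * l := by
      field_simp; ring
    linarith

theorem gI_card_le {d : ℕ} (a b o : Fin d → ℝ) (l : ℝ) (hl : 0 < l) 
    (h : ∀ j, a j ≤ b j) : ((gI a b o l).card : ℝ) * l ^ d ≤ bV a b := by
  have := sum_vol_le (gI a b o l) (fun i => gc o l i) (fun i => up (gc o l i) l) a b h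
    (by intro i _ j; simp only [up]; linarith)
    (fun i _ k _ hik => gI_disj o l hl i k hik)
    (by
      intro i hi p hp j
      have h1 := (gI_mem a b o l hl i).1 hi j
      have h2 := hp j
      exact ⟨by linarith [h2.1], by linarith [h2.2]⟩)
  simpa [bV_up] using this

/-- the class of systems considered -/
structure Sys (d : ℕ) (r0 rho R : ℝ) (S : Set (Set (Pt d))) (F : Set (Pt d) → Set (Pt d) → ℝ) :
    Prop where
  good : Good d r0 rho S
  sym : ∀ x ∈ S, ∀ y ∈ S, F x y = F y x
  far : ∀ x ∈ S, ∀ y ∈ S, (∀ p ∈ x, ∀ q ∈ y, R ≤ dist p q) → F x y = 0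

theorem grid_ineq (d : ℕ) (r0 rho R : ℝ) (hr0 : 0 < r0) (hrho : 0 ≤ rho) (hR : 0 ≤ R)
    (eta : ℝ) (heta : 0 < eta) : ∃ l0 : ℝ, 0 < l0 ∧ ∃ m : ℕ, 0 < m ∧
      ∀ S F lam, Sys d r0 rho R S F → ∀ (a b o : Fin d → ℝ) (l : ℝ), l0 ≤ l →
        (∀ j, m * l ≤ b j - a j) →
        |NB d F lam S a b - ∑ i ∈ gI a b o l, NB d F lam S (gc o l i) (up (gc o l i) l)|
          ≤ eta * bV a b ∧
        (1 - eta) * bV a b ≤ ((gI a b o l).card : ℝ) * l ^ d ∧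
        ((gI a b o l).card : ℝ) * l ^ d ≤ bV a b := by
  have hv := v0_pos d r0 hr0
  set e := min eta (eta * v0 d r0 / 5) with he
  have he0 : 0 < e := lt_min heta (by positivity)
  have he1 : e ≤ eta := min_le_left _ _
  have he2 : 5 * e ≤ eta * v0 d r0 := by
    have : e ≤ eta * v0 d r0 / 5 := min_le_right _ _
    linarith
  obtain ⟨l0, hl0, hk, hexp, hshr⟩ := eta_exists d rho (R + 1 + rho) e he0
  obtain ⟨w0, hw0, hw2, -, hws⟩ := eta_exists d 0 1 e he0
  obtain ⟨m, hm⟩ := exists_nat_ge w0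
  have hmpos : (0:ℝ) < m := lt_of_lt_of_le hw0 hm
  refine ⟨l0, hl0, m, by exact_mod_cast hmpos, ?_⟩
  intro S F lam hsys a b o l hl hside
  have hlpos : 0 < l := hl0.trans_le hl
  have hm1 : (2:ℝ) ≤ m := by linarith
  have hab : ∀ j, a j ≤ b j := fun j => by nlinarith [hside j]
  have hside' : ∀ j, l0 ≤ b j - a j := fun j => by nlinarith [hside j]
  have hV := bV_nonneg a b hab
  have hws' : 1 - e ≤ (1 - 2 * l / (m * l)) ^ d := by
    refine hws.trans ?_
    have h1 : 2 * l / (m * l) = 2 * 1 / m := by field_simp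
    rw [h1]
    have h2 : 2 * 1 / (m:ℝ) ≤ 2 * 1 / w0 := by gcongr
    have h3 : 2 * 1 / w0 ≤ 1 := by rw [div_le_one hw0]; exact hw2
    apply pow_le_pow_left₀ <;> linarith
  have hc1 := gI_card_ge a b o l (m * l) hlpos (by nlinarith) hside
  have hc1' : (1 - e) * bV a b ≤ ((gI a b o l).card : ℝ) * l ^ d :=
    (mul_le_mul_of_nonneg_right hws' hV).trans hc1
  have hc2 := gI_card_le a b o l hlpos hab
  refine ⟨?_, ?_, hc2⟩
  · have hmain := main_ineq hsys.good hr0 hrho R hR F lam hsys.sym hsys.far a b hab (gI a b o l)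
      (fun i => gc o l i) (fun i => up (gc o l i) l)
      (fun i hi j => ((gI_mem a b o l hlpos i).1 hi j).1)
      (fun i hi j => ((gI_mem a b o l hlpos i).1 hi j).2)
      (fun i hi j => by simp only [up]; linarith)
      (fun i _ k _ hik => gI_disj o l hlpos i k hik)
    have x1 := (bV_expand a b l0 rho hl0 hrho hside').trans (mul_le_mul_of_nonneg_right hexp hV)
    have hld : 0 ≤ l ^ d := by positivity
    have x2 : ∀ i, bV (fun j => gc o l i j - rho) (fun j => up (gc o l i) l j + rho) ≤
        (1 + e) * l ^ d := by
      intro i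
      have := bV_expand (gc o l i) (up (gc o l i) l) l0 rho hl0 hrho
        (fun j => by simp only [up]; linarith)
      rw [bV_up] at this
      exact this.trans (mul_le_mul_of_nonneg_right hexp hld)
    have x3 : ∀ i, (1 - e) * l ^ d ≤ bV (fun j => gc o l i j + (R + 1 + rho))
        (fun j => up (gc o l i) l j - (R + 1 + rho)) := by
      intro i
      have := bV_shrink (gc o l i) (up (gc o l i) l) l0 (R + 1 + rho) hl0 (by linarith) hk
        (fun j => by simp only [up]; linarith)
      rw [bV_up] at this
      refine (mul_le_mul_of_nonneg_right hshr hld).trans (this.trans (le_of_eq ?_))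
      unfold bV
      refine Finset.prod_congr rfl fun j _ => ?_
      ring
    have y1 : ∑ i ∈ gI a b o l, bV (fun j => gc o l i j + (R + 1 + rho))
        (fun j => up (gc o l i) l j - (R + 1 + rho)) ≥ ((gI a b o l).card : ℝ) * ((1 - e) * l ^ d) := by
      rw [← nsmul_eq_mul]
      exact Finset.card_nsmul_le_sum _ _ _ fun i _ => x3 i
    have y2 : ∑ i ∈ gI a b o l, (bV (fun j => gc o l i j - rho) (fun j => up (gc o l i) l j + rho)
        - bV (fun j => gc o l i j + (R + 1 + rho)) (fun j => up (gc o l i) l j - (R + 1 + rho)))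
        ≤ ((gI a b o l).card : ℝ) * (2 * e * l ^ d) := by
      rw [← nsmul_eq_mul]
      refine Finset.sum_le_card_nsmul _ _ _ fun i _ => ?_
      linarith [x2 i, x3 i]
    have z : |NB d F lam S a b - ∑ i ∈ gI a b o l, NB d F lam S (gc o l i) (up (gc o l i) l)|
        * v0 d r0 ≤ (eta * bV a b) * v0 d r0 := by
      refine hmain.trans ?_
      nlinarith
    exact le_of_mul_le_mul_right z hv
  · refine le_trans ?_ hc1'
    apply mul_le_mul_of_nonneg_right _ hV
    linarith

theorem bound_ineq (d : ℕ) (r0 rho R : ℝ) (hr0 : 0 < r0) (hrho : 0 ≤ rho) (hR : 0 ≤ R) :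
    ∃ D : ℝ, ∃ l0 : ℝ, 0 < l0 ∧ 
      ∀ S F lam, Sys d r0 rho R S F → ∀ (a b : Fin d → ℝ),
        (∀ j, l0 ≤ b j - a j) → NB d F lam S a b ≤ D * bV a b := by
  have hv := v0_pos d r0 hr0
  obtain ⟨l0, hl0, hk, hexp, -⟩ := eta_exists d rho 0 1 one_pos
  refine ⟨2 / v0 d r0, l0, hl0, ?_⟩
  intro S F lam hsys a b hside
  have hab : ∀ j, a j ≤ b j := fun j => by linarith [hside j]
  have hV := bV_nonneg a b hab
  have hmain := main_ineq hsys.good hr0 hrho R hR F lam hsys.sym hsys.far a b hab (∅ : Finset Unit)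
      (fun i => a) (fun i => b) (by simp) (by simp) (by simp) (by simp)
  simp only [Finset.sum_empty, sub_zero, add_zero] at hmain
  have x1 := (bV_expand a b l0 rho hl0 hrho hside).trans (mul_le_mul_of_nonneg_right hexp hV)
  have := le_abs_self (NB d F lam S a b)
  rw [div_mul_eq_mul_div, le_div_iff₀ hv]
  nlinarith

end Grid

section Limit

set_option maxHeartbeats 1000000 in
theorem limit_abs (d : ℕ) (hd : 0 < d) (W : Type) (W0 : W)
    (N : W → (Fin d → ℝ) → (Fin d → ℝ) → ℝ) (hN : ∀ S a b, 0 ≤ N S a b)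
    (hgrid : ∀ eta : ℝ, 0 < eta → ∃ l0 : ℝ, 0 < l0 ∧ ∃ m : ℕ, 0 < m ∧
      ∀ S, ∀ (a b o : Fin d → ℝ) (l : ℝ), l0 ≤ l →
        (∀ j, m * l ≤ b j - a j) →
        |N S a b - ∑ i ∈ gI a b o l, N S (gc o l i) (up (gc o l i) l)| ≤ eta * bV a b ∧
        (1 - eta) * bV a b ≤ ((gI a b o l).card : ℝ) * l ^ d ∧
        ((gI a b o l).card : ℝ) * l ^ d ≤ bV a b)
    (hbd : ∃ D : ℝ, ∃ l0 : ℝ, 0 < l0 ∧ ∀ S, ∀ (a b : Fin d → ℝ),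
        (∀ j, l0 ≤ b j - a j) → N S a b ≤ D * bV a b)
    (hLR : ∃ K : ℝ, 1 ≤ K ∧ ∃ L1 : ℝ, 0 < L1 ∧ ∀ L, L1 ≤ L → ∀ (S : W) (o : Fin d → ℝ) (S' : W) (a : Fin d → ℝ), ∃ o' : Fin d → ℝ,
      (∀ j, a j ≤ o' j ∧ o' j + L ≤ a j + K * L) ∧ N S' o' (up o' L) = N S o (up o L)) :
    ∃ k : ℝ, ∀ eps : ℝ, 0 < eps → ∃ r : ℝ, 0 < r ∧ ∀ S a b, (∀ j, r ≤ b j - a j) →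
      |N S a b / bV a b - k| < eps := by
  obtain ⟨D, lD, hlD, hD⟩ := hbd
  obtain ⟨K, hK, L1, hL1, hLR⟩ := hLR
  set U : Set ℝ := {u | ∃ w : ℝ, 0 < w ∧ ∀ S a b, (∀ j, w ≤ b j - a j) → N S a b ≤ u * bV a b} with hU
  have hUne : U.Nonempty := ⟨D, lD, hlD, hD⟩
  have hUb : ∀ u ∈ U, 0 ≤ u := by
    rintro u ⟨w, hw, h⟩
    have h1 := h W0 (fun _ => 0) (up (fun _ => 0) w) (fun j => by simp [up])
    rw [bV_up] at h1
    have h2 := hN W0 (fun _ => 0) (up (fun _ => 0) w)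
    have h3 : 0 < w ^ d := by positivity
    by_contra hcon
    push Not at hcon
    nlinarith
  have hUbb : BddBelow U := ⟨0, hUb⟩
  set k := sInf U with hk
  have hk0 : 0 ≤ k := le_csInf hUne hUb
  have hup : ∀ del : ℝ, 0 < del → ∃ w : ℝ, 0 < w ∧ ∀ S a b, (∀ j, w ≤ b j - a j) →
      N S a b ≤ (k + del) * bV a b := by
    intro del hdel
    obtain ⟨u, ⟨w, hw, h⟩, hu⟩ := exists_lt_of_csInf_lt hUne (show sInf U < k + del by linarith)
    refine ⟨w, hw, fun S a b hs => (h S a b hs).trans ?_⟩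
    apply mul_le_mul_of_nonneg_right hu.le
    exact bV_nonneg a b fun j => by linarith [hs j]
  have hnot : ∀ u, u < k → u ∉ U := fun u hu hmem => by
    have := csInf_le hUbb hmem
    linarith
  have hcube : ∀ eps : ℝ, 0 < eps → ∃ L0 : ℝ, 0 < L0 ∧ ∀ L, L0 ≤ L → ∀ S o,
      (k - eps) * L ^ d < N S o (up o L) := by
    intro eps heps
    have hKd : 0 < K ^ d := by positivity
    set th := eps / K ^ d with hth
    have hth0 : 0 < th := by positivity
    set del := min 1 (th / 8) with hdel
    have hdel0 : 0 < del := lt_min one_pos (by positivity)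
    have hdel1 : del ≤ 1 := min_le_left _ _
    have hdel2 : del ≤ th / 8 := min_le_right _ _
    set eta := th / (8 * (k + 4)) with heta
    have heta0 : 0 < eta := by positivity
    have heta1 : eta * (k + 4) = th / 8 := by rw [heta]; field_simp
    obtain ⟨l0, hl0, m, hm, hg⟩ := hgrid eta heta0
    obtain ⟨w, hw, hupw⟩ := hup del hdel0
    have hmR : (1:ℝ) ≤ m := by exact_mod_cast hm
    refine ⟨max L1 (m * max l0 w), lt_max_of_lt_left hL1, ?_⟩
    intro L hL S o
    have hLL1 : L1 ≤ L := (le_max_left _ _).trans hL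
    have hLm : m * max l0 w ≤ L := (le_max_right _ _).trans hL
    have hLpos : 0 < L := hL1.trans_le hLL1
    by_contra hcon
    push Not at hcon
    set l := L / m with hl
    have hml : m * l = L := by rw [hl]; field_simp
    have hlm : max l0 w ≤ l := by
      rw [hl, le_div_iff₀ (by linarith)]; linarith
    have hll0 : l0 ≤ l := (le_max_left _ _).trans hlm
    have hlw : w ≤ l := (le_max_right _ _).trans hlm
    have hlpos : 0 < l := hw.trans_le hlw
    have hll : l ≤ L := by nlinarith
    set M := K * L with hM
    have hLM : L ≤ M := by nlinarith
    have hMpos : 0 < M := by positivity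
    have hMd : M ^ d = K ^ d * L ^ d := mul_pow _ _ _
    have hLd : 0 < L ^ d := by positivity
    have hepsth : eps * L ^ d = th * M ^ d := by
      rw [hMd, hth]; field_simp
    have hLdMd : L ^ d ≤ M ^ d := pow_le_pow_left₀ hLpos.le hLM d
    have claim : ∀ S' a, N S' a (up a M) ≤ (k - th / 2) * M ^ d := by
      intro S' a
      obtain ⟨o', ho', hNo'⟩ := hLR L hLL1 S o S' a
      obtain ⟨q1, q2, q3⟩ := hg S' a (up a M) o' l hll0 (fun j => by simp only [up]; linarith)
      obtain ⟨c1, c2, c3⟩ := hg S' o' (up o' L) o' l hll0 (fun j => by simp only [up]; linarith)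
      rw [bV_up] at q1 q2 q3 c1 c2 c3
      have hsub : gI o' (up o' L) o' l ⊆ gI a (up a M) o' l := by
        intro i hi
        rw [gI_mem _ _ _ _ hlpos] at hi ⊢
        intro j
        have h1 := hi j
        have h2 := ho' j
        simp only [up] at h1 ⊢
        exact ⟨by linarith [h1.1], by linarith [h1.2]⟩
      have hsum := Finset.sum_sdiff (f := fun i => N S' (gc o' l i) (up (gc o' l i) l)) hsub
      have hcard := Finset.card_sdiff_add_card_eq_card hsub
      have hcardR : ((gI a (up a M) o' l \ gI o' (up o' L) o' l).card : ℝ) +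
          ((gI o' (up o' L) o' l).card : ℝ) = ((gI a (up a M) o' l).card : ℝ) := by
        exact_mod_cast hcard
      have hrest : ∑ i ∈ gI a (up a M) o' l \ gI o' (up o' L) o' l,
          N S' (gc o' l i) (up (gc o' l i) l) ≤
          ((gI a (up a M) o' l \ gI o' (up o' L) o' l).card : ℝ) * ((k + del) * l ^ d) := by
        rw [← nsmul_eq_mul]
        refine Finset.sum_le_card_nsmul _ _ _ fun i _ => ?_
        have := hupw S' (gc o' l i) (up (gc o' l i) l) (fun j => by simp only [up]; linarith)
        rwa [bV_up] at this
      rw [hNo'] at c1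
      have a1 := (abs_le.1 q1).2
      have a2 := (abs_le.1 c1).1
      have hcl : ((gI a (up a M) o' l \ gI o' (up o' L) o' l).card : ℝ) * l ^ d ≤
          M ^ d - (1 - eta) * L ^ d := by
        have : ((gI a (up a M) o' l \ gI o' (up o' L) o' l).card : ℝ) * l ^ d =
          ((gI a (up a M) o' l).card : ℝ) * l ^ d - ((gI o' (up o' L) o' l).card : ℝ) * l ^ d := by
          rw [← hcardR]; ring
        linarith
      have hrest2 : ((gI a (up a M) o' l \ gI o' (up o' L) o' l).card : ℝ) * ((k + del) * l ^ d) ≤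
          (k + del) * (M ^ d - (1 - eta) * L ^ d) := by
        have := mul_le_mul_of_nonneg_left hcl (show 0 ≤ k + del by linarith)
        linarith
      have tot : N S' a (up a M) ≤ (k + del) * (M ^ d - (1 - eta) * L ^ d) +
          (k - eps) * L ^ d + eta * L ^ d + eta * M ^ d := by linarith
      have e1 : eta * L ^ d ≤ eta * M ^ d := mul_le_mul_of_nonneg_left hLdMd heta0.le
      have e2 : (k + del) * (eta * L ^ d) ≤ (k + 1) * (eta * M ^ d) := by
        apply mul_le_mul (by linarith) e1 (by positivity) (by linarith)
      have e3 : del * M ^ d ≤ th / 8 * M ^ d := mul_le_mul_of_nonneg_right hdel2 (by positivity)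
      have e4 : eta * (k + 4) * M ^ d = th / 8 * M ^ d := by rw [heta1]
      have e5 : 0 ≤ del * L ^ d := by positivity
      have e6 : 0 ≤ th * M ^ d := by positivity
      have e7 : 0 ≤ eta * M ^ d := by positivity
      have t1 : (k + del) * (M ^ d - (1 - eta) * L ^ d) + (k - eps) * L ^ d + eta * L ^ d
          + eta * M ^ d = k * M ^ d + del * M ^ d - del * L ^ d + (k + del) * (eta * L ^ d)
          - eps * L ^ d + eta * L ^ d + eta * M ^ d := by ring
      have t2 : eta * (k + 4) * M ^ d = (k + 1) * (eta * M ^ d) + 3 * (eta * M ^ d) := by ring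
      have t3 : (k - th / 2) * M ^ d = k * M ^ d - th * M ^ d / 2 := by ring
      have t4 : th / 8 * M ^ d = th * M ^ d / 8 := by ring
      linarith
    have hpos : 0 ≤ k - th / 2 := by
      have h1 := claim W0 (fun _ => 0)
      have h2 := hN W0 (fun _ => 0) (up (fun _ => 0) M)
      have h3 : 0 < M ^ d := by positivity
      by_contra hc
      push Not at hc
      nlinarith
    have heta2 : eta ≤ th / 8 := by nlinarith
    apply hnot (k - th / 2 + eta) (by linarith)
    refine ⟨m * M, by positivity, ?_⟩
    intro S' a b hside
    obtain ⟨q1, q2, q3⟩ := hg S' a b a M (by linarith) hside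
    have hsum : ∑ i ∈ gI a b a M, N S' (gc a M i) (up (gc a M i) M) ≤
        ((gI a b a M).card : ℝ) * ((k - th / 2) * M ^ d) := by
      rw [← nsmul_eq_mul]
      exact Finset.sum_le_card_nsmul _ _ _ fun i _ => claim S' _
    have a1 := (abs_le.1 q1).2
    have := mul_le_mul_of_nonneg_left q3 hpos
    nlinarith
  refine ⟨k, fun eps heps => ?_⟩
  obtain ⟨L0, hL0, hc⟩ := hcube (eps / 3) (by linarith)
  obtain ⟨w, hw, hupw⟩ := hup (eps / 2) (by linarith)
  set eta := eps / (4 * (k + 1)) with heta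
  have heta0 : 0 < eta := by positivity
  have heta1 : eta * (k + 1) = eps / 4 := by rw [heta]; field_simp
  obtain ⟨l0, hl0, m, hm, hg⟩ := hgrid eta heta0
  set l := max l0 L0 with hl
  have hlpos : 0 < l := lt_max_of_lt_left hl0
  refine ⟨max w (m * l), lt_max_of_lt_left hw, ?_⟩
  intro S a b hside
  have hs1 : ∀ j, w ≤ b j - a j := fun j => (le_max_left _ _).trans (hside j)
  have hs2 : ∀ j, m * l ≤ b j - a j := fun j => (le_max_right _ _).trans (hside j)
  have hV : 0 < bV a b := bV_pos a b fun j => by linarith [hs1 j]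
  have hu := hupw S a b hs1
  obtain ⟨q1, q2, q3⟩ := hg S a b a l (le_max_left _ _) hs2
  have hsum : ((gI a b a l).card : ℝ) * ((k - eps / 3) * l ^ d) ≤
      ∑ i ∈ gI a b a l, N S (gc a l i) (up (gc a l i) l) := by
    rw [← nsmul_eq_mul]
    exact Finset.card_nsmul_le_sum _ _ _ fun i _ => (hc l (le_max_right _ _) S _).le
  have a1 := (abs_le.1 q1).1
  have hlow : (k - eps / 3) * bV a b - k * eta * bV a b ≤
      ((gI a b a l).card : ℝ) * ((k - eps / 3) * l ^ d) := by
    have p1 := mul_le_mul_of_nonneg_left q2 hk0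
    have p2 := mul_le_mul_of_nonneg_left q3 (show 0 ≤ eps / 3 by linarith)
    nlinarith
  have hfinal : (k - eps / 3 - eps / 4) * bV a b ≤ N S a b := by
    have : eta * (k + 1) * bV a b = eps / 4 * bV a b := by rw [heta1]
    nlinarith
  rw [abs_lt]
  constructor
  · have : k - eps / 3 - eps / 4 ≤ N S a b / bV a b := by rwa [le_div_iff₀ hV]
    linarith
  · have : N S a b / bV a b ≤ k + eps / 2 := by rwa [div_le_iff₀ hV]
    linarith

end Limit

section Transfer

/-- translate of a set -/
def tr {d : ℕ} (t : Pt d) (x : Set (Pt d)) : Set (Pt d) := (fun p => p + t) '' x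

theorem mem_tr {d : ℕ} {t : Pt d} {x : Set (Pt d)} {p : Pt d} : p ∈ tr t x ↔ p - t ∈ x := by
  constructor
  · rintro ⟨q, hq, rfl⟩
    simpa using hq
  · intro h
    exact ⟨p - t, h, by simp⟩

theorem tr_inj {d : ℕ} (t : Pt d) : Function.Injective (tr t) :=
  Set.image_injective.2 (add_left_injective t)

theorem match_tile {d : ℕ} {r0 rho : ℝ} {S : Set (Set (Pt d))} (hS : Good d r0 rho S)
    (hr0 : 0 < r0) (P : Set (Set (Pt d))) (hPS : P ⊆ S) (hP : P.Finite) (x : Set (Pt d))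
    (hx : x ∈ S) (hc : x ⊆ ⋃₀ P) : x ∈ P := by
  by_contra hne
  obtain ⟨c, hcx⟩ := hS.inner x hx
  have hd : Dense (⋂ p ∈ P, (frontier p)ᶜ) := by
    apply dense_biInter_of_isOpen
    · intro p _
      exact isClosed_frontier.isOpen_compl
    · exact hP.countable
    · intro p hp
      rw [← interior_eq_empty_iff_dense_compl]
      exact interior_frontier (hS.closed p (hPS hp))
  obtain ⟨z, hz1, hz2⟩ := hd.inter_open_nonempty (ball c r0) isOpen_ball ⟨c, mem_ball_self hr0⟩
  obtain ⟨p, hp, hzp⟩ := hc (hcx hz1)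
  have hzf : z ∉ frontier p := by
    simp only [mem_iInter] at hz2
    exact hz2 p hp
  have hzi : z ∈ interior p := by
    by_contra hcon
    apply hzf
    rw [(hS.closed p (hPS hp)).frontier_eq]
    exact ⟨hzp, hcon⟩
  have hzx : z ∈ interior x := interior_maximal hcx isOpen_ball hz1
  have hpx : p ≠ x := fun h => hne (h ▸ hp)
  have := hS.disj (hPS hp) hx hpx
  have h2 : z ∈ interior p ∩ interior x := ⟨hzi, hzx⟩
  rw [this] at h2
  exact h2

/-- tiles meeting a ball -/
def tb (d : ℕ) (S : Set (Set (Pt d))) (c : Pt d) (r : ℝ) : Set (Set (Pt d)) :=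
  {x | x ∈ S ∧ (x ∩ closedBall c r).Nonempty}

theorem tb_sub {d : ℕ} {r0 rho : ℝ} {S : Set (Set (Pt d))} (hS : Good d r0 rho S)
    {c : Pt d} {r : ℝ} {x : Set (Pt d)} (hx : x ∈ tb d S c r) : x ⊆ closedBall c (r + rho) := by
  obtain ⟨hxS, p, hp, hpc⟩ := hx
  intro q hq
  have h1 := hS.diam x hxS q hq p hp
  have h2 := dist_triangle q p c
  rw [mem_closedBall] at hpc ⊢
  linarith

theorem tb_fin {d : ℕ} {r0 rho : ℝ} {S : Set (Set (Pt d))} (hS : Good d r0 rho S)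
    (hr0 : 0 < r0) (c : Pt d) (r : ℝ) : (tb d S c r).Finite :=
  (count_le hS hr0 _ (fun _ hx => hx.1) (closedBall c (r + rho)) measure_closedBall_lt_top.ne
    fun _ hx => tb_sub hS hx).1

theorem tb_cover {d : ℕ} {r0 rho : ℝ} {S : Set (Set (Pt d))} (hS : Good d r0 rho S)
    (c : Pt d) (r : ℝ) : closedBall c r ⊆ ⋃₀ tb d S c r := by
  intro p hp
  obtain ⟨x, hx, hpx⟩ := hS.cover p
  exact ⟨x, ⟨hx, p, hpx, hp⟩, hpx⟩

theorem back {d : ℕ} {r0 rho : ℝ} {S S' : Set (Set (Pt d))} (hS : Good d r0 rho S)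
    (hS' : Good d r0 rho S') (hr0 : 0 < r0) (c t : Pt d) (r : ℝ)
    (h : patTrans d t (tb d S c r) ⊆ S') (x' : Set (Pt d)) (hx' : x' ∈ S') (p : Pt d)
    (hp : p ∈ x') (hpc : dist p (c + t) + rho ≤ r) : ∃ x ∈ S, x' = tr t x := by
  have : x' ∈ patTrans d t (tb d S c r) := by
    apply match_tile hS' hr0 _ h ((tb_fin hS hr0 c r).image _) x' hx'
    intro q hq
    have h1 := hS'.diam x' hx' q hq p hp
    have h2 := dist_triangle q p (c + t)
    have h3 : q - t ∈ closedBall c r := by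
      rw [mem_closedBall]
      have : dist (q - t) c = dist q (c + t) := by
        rw [dist_eq_norm, dist_eq_norm]; congr 1; abel
      rw [this]; linarith
    obtain ⟨x, hx, hqx⟩ := tb_cover hS c r h3
    exact ⟨tr t x, ⟨x, hx, rfl⟩, mem_tr.2 hqx⟩
  obtain ⟨x, hx, rfl⟩ := this
  exact ⟨x, hx.1, rfl⟩

theorem transfer {d : ℕ} {r0 rho R : ℝ} {S S' : Set (Set (Pt d))} (hS : Good d r0 rho S)
    (hS' : Good d r0 rho S') (hr0 : 0 < r0) (hrho : 0 ≤ rho) (hR : 0 ≤ R)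
    (F F' : Set (Pt d) → Set (Pt d) → ℝ) (lam : ℝ)
    (hsym : ∀ x ∈ S', ∀ y ∈ S', F' x y = F' y x)
    (c t : Pt d) (r : ℝ)
    (hinv : ∀ x ∈ S, ∀ y ∈ S, tr t x ∈ S' → tr t y ∈ S' →
      patTrans d t (nbhdPattern d S x y R) = nbhdPattern d S' (tr t x) (tr t y) R →
      F' (tr t x) (tr t y) = F x y)
    (h : patTrans d t (tb d S c r) ⊆ S') (a b : Fin d → ℝ)
    (hab : ∀ p ∈ ob d a b, dist p c + 2 * rho + R ≤ r) :
    NB d F' lam S' (fun j => a j + t j) (fun j => b j + t j) = NB d F lam S a b := by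
  have hob : ∀ q, q ∈ ob d (fun j => a j + t j) (fun j => b j + t j) ↔ q - t ∈ ob d a b := by
    intro q
    simp only [ob, mem_setOf_eq, mem_Ioo, PiLp.sub_apply]
    constructor
    · intro hq j
      exact ⟨by linarith [(hq j).1], by linarith [(hq j).2]⟩
    · intro hq j
      exact ⟨by linarith [(hq j).1], by linarith [(hq j).2]⟩
  have hfw : ∀ x ∈ S, ∀ p ∈ x, dist p c ≤ r → tr t x ∈ S' := fun x hx p hp hpc =>
    h ⟨x, ⟨hx, p, hp, hpc⟩, rfl⟩
  have hdt : ∀ q, dist q (c + t) = dist (q - t) c := fun q => by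
    rw [dist_eq_norm, dist_eq_norm]; congr 1; abel
  set X := tilesMeeting d S (boxSet d a b) with hX
  set Y := tilesMeeting d S' (boxSet d (fun j => a j + t j) (fun j => b j + t j)) with hY
  have hXf : X.Finite := tm_finite hS hr0 a b
  have hYf : Y.Finite := tm_finite hS' hr0 _ _
  have himg : tr t '' X = Y := by
    ext y
    constructor
    · rintro ⟨x, hx, rfl⟩
      obtain ⟨hxS, p, hp, hpo⟩ := mem_tm.1 hx
      refine mem_tm.2 ⟨hfw x hxS p hp (by linarith [hab p hpo]), p + t, mem_tr.2 (by simpa using hp), ?_⟩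
      rw [hob]; simpa using hpo
    · intro hy
      obtain ⟨hyS, p, hp, hpo⟩ := mem_tm.1 hy
      rw [hob] at hpo
      obtain ⟨x, hx, rfl⟩ := back hS hS' hr0 c t r h y hyS p hp
        (by rw [hdt]; linarith [hab _ hpo])
      exact ⟨x, mem_tm.2 ⟨hx, p - t, mem_tr.1 hp, hpo⟩, rfl⟩
  have hnear : ∀ x ∈ X, ∀ q ∈ x, dist q c + rho + R ≤ r := by
    intro x hx q hq
    obtain ⟨hxS, p, hp, hpo⟩ := mem_tm.1 hx
    have h1 := hS.diam x hxS q hq p hp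
    have h2 := dist_triangle q p c
    linarith [hab p hpo]
  have hmaps : ∀ x ∈ X, tr t x ∈ S' := fun x hx => by
    have : tr t x ∈ Y := himg ▸ ⟨x, hx, rfl⟩
    exact this.1
  have haa : ∀ x ∈ X, ∀ y ∈ X, F' (tr t x) (tr t y) = F x y := by
    intro x hx y hy
    apply hinv x hx.1 y hy.1 (hmaps x hx) (hmaps y hy)
    have hq : ∀ q ∈ x ∪ y, dist q c + rho + R ≤ r := by
      rintro q (hq | hq)
      · exact hnear x hx q hq
      · exact hnear y hy q hq
    ext s'
    constructor
    · rintro ⟨s, ⟨hs, p, hp, q, hqxy, hpq⟩, rfl⟩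
      have h1 := hq q hqxy
      have h2 := dist_triangle p q c
      refine ⟨hfw s hs p hp (by linarith), p + t, ⟨p, hp, rfl⟩, q + t, ?_, by simpa using hpq⟩
      rcases hqxy with hqx | hqy
      · exact Or.inl ⟨q, hqx, rfl⟩
      · exact Or.inr ⟨q, hqy, rfl⟩
    · rintro ⟨hs', p', hp', q', hq', hpq⟩
      have hqm : q' - t ∈ x ∪ y := by
        rcases hq' with hqx | hqy
        · exact Or.inl (mem_tr.1 hqx)
        · exact Or.inr (mem_tr.1 hqy)
      have h1 := hq _ hqm
      have h2 := dist_triangle (p' - t) (q' - t) c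
      have h3 : dist (p' - t) (q' - t) = dist p' q' := by simp
      obtain ⟨s, hs, rfl⟩ := back hS hS' hr0 c t r h s' hs' p' hp' (by rw [hdt]; linarith)
      exact ⟨s, ⟨hs, p' - t, mem_tr.1 hp', q' - t, hqm, by rw [h3]; exact hpq⟩, rfl⟩
  obtain ⟨n1, n2⟩ := NX_comp F F' lam X Y hXf hYf (tr t) (tr_inj t).injOn
    (fun x hx => himg ▸ ⟨x, hx, rfl⟩) haa (fun x hx y hy => hsym x hx.1 y hy.1)
  have hcard : Y.ncard = X.ncard := by
    rw [← himg, Set.ncard_image_of_injective _ (tr_inj t)]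
  unfold NB
  rw [← hX, ← hY]
  have : NX F' lam Y = NX F lam X := by omega
  rw [this]

end Transfer

section Radii

theorem ball_le {d : ℕ} (hd : 0 < d) {x y : Pt d} {r s : ℝ} (hs : 0 ≤ s)
    (h : closedBall x r ⊆ closedBall y s) : r ≤ s := by
  by_contra hcon
  push Not at hcon
  have hr : 0 ≤ r := hs.trans hcon.le
  haveI : Nonempty (Fin d) := ⟨⟨0, hd⟩⟩
  obtain ⟨e, he⟩ := exists_norm_eq (Pt d) (zero_le_one)
  have h1 : x + r • e ∈ closedBall x r := by
    simp [mem_closedBall, dist_eq_norm, norm_smul, he, abs_of_nonneg hr]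
  have h2 : x - r • e ∈ closedBall x r := by
    simp [mem_closedBall, dist_eq_norm, norm_smul, he, abs_of_nonneg hr]
  have h3 := mem_closedBall.1 (h h1)
  have h4 := mem_closedBall.1 (h h2)
  have h5 := dist_triangle_right (x + r • e) (x - r • e) y
  have h6 : dist (x + r • e) (x - r • e) = 2 * r := by
    rw [dist_eq_norm]
    have : x + r • e - (x - r • e) = (2 * r) • e := by module
    rw [this, norm_smul, he, Real.norm_eq_abs, abs_of_nonneg (by linarith), mul_one]
  linarith

theorem le_rOut {d : ℕ} (hd : 0 < d) {M : Set (Set (Pt d))} {c : Pt d} {r s : ℝ} (hr : 0 ≤ r)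
    (h : closedBall c r ⊆ supp d M) (h2 : supp d M ⊆ closedBall c s) :
    r ≤ rOut d M ∧ rOut d M ≤ s := by
  have hpos : ∀ u (y : Pt d), supp d M ⊆ closedBall y u → 0 ≤ u := fun u y hy =>
    nonempty_closedBall.1 ⟨c, hy (h (mem_closedBall_self hr))⟩
  constructor
  · apply le_csInf
    · exact ⟨s, c, h2⟩
    · rintro u ⟨y, hy⟩
      exact ball_le hd (hpos u y hy) (h.trans hy)
  · apply csInf_le
    · exact ⟨0, fun u ⟨y, hy⟩ => hpos u y hy⟩
    · exact ⟨c, h2⟩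

theorem le_rIn {d : ℕ} (hd : 0 < d) {M : Set (Set (Pt d))} {c : Pt d} {r s : ℝ} (hs : 0 ≤ s)
    (h : closedBall c r ⊆ supp d M) (h2 : supp d M ⊆ closedBall c s) :
    r ≤ rIn d M := by
  apply le_csSup
  · exact ⟨s, fun u ⟨y, hy⟩ => ball_le hd hs (hy.trans h2)⟩
  · exact ⟨c, h⟩

theorem dist_le_coord {d : ℕ} (p q : Pt d) (L : ℝ) (hL : 0 ≤ L) (h : ∀ j, |p j - q j| ≤ L) :
    dist p q ≤ d * L := by
  rw [EuclideanSpace.dist_eq]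
  apply Real.sqrt_le_iff.2
  refine ⟨by positivity, ?_⟩
  have h1 : ∑ i, dist (p i) (q i) ^ 2 ≤ ∑ i : Fin d, L ^ 2 := by
    apply Finset.sum_le_sum
    intro i _
    rw [Real.dist_eq]
    exact pow_le_pow_left₀ (abs_nonneg _) (h i) 2
  refine h1.trans ?_
  rw [Finset.sum_const, Finset.card_univ, Fintype.card_fin, nsmul_eq_mul, mul_pow]
  apply mul_le_mul_of_nonneg_right _ (by positivity)
  have : d ≤ d ^ 2 := Nat.le_self_pow (by norm_num) d
  exact_mod_cast this

theorem tiling_good (d : ℕ) (T : Set (Set (Pt d)))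
    (hadm : Admissible d (patternClassesOf d T)) : ∃ r0 rho : ℝ, 0 < r0 ∧ 0 ≤ rho ∧
      ∀ S ∈ TilingsOf d (patternClassesOf d T), Good d r0 rho S := by
  obtain ⟨rmin, rmax, h0, h1, hb⟩ := hadm.tileBounds
  refine ⟨rmin / 2, 2 * (rmax + 1), by linarith, by linarith, ?_⟩
  rintro S ⟨⟨htile, hdisj, hcov⟩, hPs⟩
  have hcomp : ∀ x ∈ S, IsCompact x := by
    intro x hx
    obtain ⟨e⟩ := htile x hx
    haveI : CompactSpace (closedBall (0 : Pt d) 1) :=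
      isCompact_iff_compactSpace.1 (isCompact_closedBall _ _)
    haveI : CompactSpace x := e.symm.compactSpace
    exact isCompact_iff_compactSpace.2 inferInstance
  have hs : ∀ x : Set (Pt d), supp d {x} = x := fun x => by simp [supp]
  have hbd : ∀ x ∈ S, rmin ≤ rIn d {x} ∧ rOut d {x} ≤ rmax := by
    intro x hx
    have hp : IsPattern d {x} := ⟨finite_singleton x, singleton_nonempty x,
      by rintro m rfl; exact htile m hx, by simp⟩
    have := hb x (hPs {x} hp (by simpa using hx))
    exact ⟨this.1, this.2.2⟩
  refine ⟨?_, hdisj, fun x hx => (hcomp x hx).isClosed, ?_, ?_⟩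
  · intro p
    have : p ∈ ⋃₀ S := by rw [hcov]; trivial
    exact this
  · intro x hx
    have h2 := (hbd x hx).1
    unfold rIn at h2
    obtain ⟨r, ⟨c, hc⟩, hr⟩ := exists_lt_of_lt_csSup
      (⟨-1, 0, by rw [closedBall_eq_empty.2 (by norm_num)]; exact empty_subset _⟩ :
        {r : ℝ | ∃ y : Pt d, closedBall y r ⊆ supp d {x}}.Nonempty)
      (show rmin / 2 < _ by linarith)
    rw [hs] at hc
    exact ⟨c, ball_subset_closedBall.trans ((closedBall_subset_closedBall hr.le).trans hc)⟩
  · intro x hx p hp q hq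
    have h2 := (hbd x hx).2
    unfold rOut at h2
    have hne : {r : ℝ | ∃ y : Pt d, supp d {x} ⊆ closedBall y r}.Nonempty := by
      obtain ⟨r, hr⟩ := (hcomp x hx).isBounded.subset_closedBall (0 : Pt d)
      exact ⟨r, 0, by rwa [hs]⟩
    obtain ⟨r, ⟨c, hc⟩, hr⟩ := exists_lt_of_csInf_lt hne (show _ < rmax + 1 by linarith)
    rw [hs] at hc
    have h3 := mem_closedBall.1 (hc hp)
    have h4 := mem_closedBall.1 (hc hq)
    have := dist_triangle_right p q c
    linarith

theorem tb_mem {d : ℕ} {r0 rho : ℝ} {T S : Set (Set (Pt d))} (hS : Good d r0 rho S)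
    (hr0 : 0 < r0) (hST : S ∈ TilingsOf d (patternClassesOf d T)) (c : Pt d) (r : ℝ)
    (hr : 0 ≤ r) : tb d S c r ∈ patternClassesOf d T := by
  apply hST.2
  · refine ⟨tb_fin hS hr0 c r, ?_, fun m hm => hST.1.1 m hm.1, hS.disj.mono fun m hm => hm.1⟩
    obtain ⟨x, hx, -⟩ := tb_cover hS c r (mem_closedBall_self hr)
    exact ⟨x, hx⟩
  · exact fun m hm => hm.1

theorem lr_step (d : ℕ) (hd : 0 < d) (T : Set (Set (Pt d)))
    (hlr : LinearlyRepetitive d (patternClassesOf d T))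
    (R : ℝ) (hR : 0 ≤ R) (r0 rho : ℝ) (hr0 : 0 < r0) (hrho : 0 ≤ rho)
    (hgood : ∀ S ∈ TilingsOf d (patternClassesOf d T), Good d r0 rho S)
    (A : Set (Set (Pt d)) → Set (Pt d) → Set (Pt d) → ℝ)
    (hsym : ∀ S ∈ TilingsOf d (patternClassesOf d T), ∀ x ∈ S, ∀ y ∈ S,
      A S x y = A S y x)
    (hinv : ∀ S ∈ TilingsOf d (patternClassesOf d T),
      ∀ S' ∈ TilingsOf d (patternClassesOf d T), ∀ x ∈ S, ∀ y ∈ S, ∀ t : Pt d,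
      ((fun p => p + t) '' x) ∈ S' → ((fun p => p + t) '' y) ∈ S' →
      patTrans d t (nbhdPattern d S x y R) =
        nbhdPattern d S' ((fun p => p + t) '' x) ((fun p => p + t) '' y) R →
      A S' ((fun p => p + t) '' x) ((fun p => p + t) '' y) = A S x y) (lam : ℝ) :
    ∃ K : ℝ, 1 ≤ K ∧ ∃ L1 : ℝ, 0 < L1 ∧ ∀ L, L1 ≤ L →
      ∀ S ∈ TilingsOf d (patternClassesOf d T), ∀ o : Fin d → ℝ,
      ∀ S' ∈ TilingsOf d (patternClassesOf d T), ∀ a : Fin d → ℝ, ∃ o' : Fin d → ℝ,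
      (∀ j, a j ≤ o' j ∧ o' j + L ≤ a j + K * L) ∧
        NB d (A S') lam S' o' (up o' L) = NB d (A S) lam S o (up o L) := by
  obtain ⟨cl, hcl, hlr⟩ := hlr
  have hd1 : (1 : ℝ) ≤ d := by exact_mod_cast hd
  set H := cl * (d + 2) + 1 with hH
  have hHpos : 0 < H := by positivity
  refine ⟨2 * H + 1, by linarith, max 1 (2 * rho + R), lt_max_of_lt_left one_pos, ?_⟩
  intro L hL S hS o S' hS' a
  have hL1 : 1 ≤ L := (le_max_left _ _).trans hL
  have hL2 : 2 * rho + R ≤ L := (le_max_right _ _).trans hL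
  have gS := hgood S hS
  have gS' := hgood S' hS'
  set c : Pt d := WithLp.toLp 2 o with hc
  set c' : Pt d := WithLp.toLp 2 (fun j => a j + H * L) with hc'
  set r := d * L + 2 * rho + R with hr
  set r' := cl * (r + rho) with hr'
  have hdL : L ≤ d * L := by nlinarith
  have hrpos : 0 ≤ r := by linarith
  have hrL : r + rho ≤ (d + 2) * L := by
    have : ((d:ℝ) + 2) * L = d * L + 2 * L := by ring
    linarith
  have hr'L : r' + rho ≤ H * L := by
    have h1 : r' ≤ cl * ((d + 2) * L) := mul_le_mul_of_nonneg_left hrL hcl.le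
    have h2 : H * L = cl * ((d + 2) * L) + L := by rw [hH]; ring
    linarith
  have hr'pos : 0 ≤ r' := by positivity
  have sup1 : ∀ S ∈ TilingsOf d (patternClassesOf d T), ∀ c r,
      supp d (tb d S c r) ⊆ closedBall c (r + rho) := fun S hS c r =>
    sUnion_subset fun x hx => tb_sub (hgood S hS) hx
  obtain ⟨o1, o2⟩ := le_rOut hd hrpos (tb_cover gS c r) (sup1 S hS c r)
  have o3 := le_rIn hd (by linarith) (tb_cover gS' c' r') (sup1 S' hS' c' r')
  obtain ⟨t, ht⟩ := hlr _ (tb_mem gS hr0 hS c r hrpos) (by linarith)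
    _ (tb_mem gS' hr0 hS' c' r' hr'pos) ((mul_le_mul_of_nonneg_left o2 hcl.le).trans o3)
  have hct : dist (c + t) c' ≤ r' + rho := by
    obtain ⟨x, hx, hcx⟩ := tb_cover gS c r (mem_closedBall_self hrpos)
    have h1 : tr t x ∈ tb d S' c' r' := ht ⟨x, hx, rfl⟩
    exact mem_closedBall.1 (tb_sub gS' h1 ⟨c, hcx, rfl⟩)
  refine ⟨fun j => o j + t j, fun j => ?_, ?_⟩
  · have h1 := (coord_dist (c + t) c' j).trans hct
    simp only [hc, hc', PiLp.add_apply] at h1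
    have h2 := abs_le.1 h1
    have h3 : (2 * H + 1) * L = H * L + H * L + L := by ring
    exact ⟨by linarith [h2.1], by linarith [h2.2]⟩
  · have := transfer gS gS' hr0 hrho hR (A S) (A S') lam (hsym S' hS') c t r
      (fun x hx y hy => hinv S hS S' hS' x hx y hy t) (fun m hm => (ht hm).1) o (up o L) ?_
    · rw [← this]
      congr 1
      funext j
      simp only [up]; ring
    · intro p hp
      have : dist p c ≤ d * L := by
        apply dist_le_coord p c L (by linarith)
        intro j
        have := hp j
        simp only [up, mem_Ioo] at this
        simp only [hc]
        rw [abs_le]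
        exact ⟨by linarith [this.1], by linarith [this.2]⟩
      linarith

end Radii

/-- Theorem 5.1, existence of the integrated density of states.
Let `T` be a linearly repetitive tiling and `A` a symmetric finite-range
translation-invariant operator family on the tilings of `Ω(𝒫(T))`.  Then for every
`λ ∈ ℝ` the eigenvalue counting functions `k_λ^S(B)` converge as `ω(B) → ∞`, uniformly
in `S ∈ Ω(𝒫(T))`, to a limit `k(λ)` independent of `S`. -/
theorem ids_exists (d : ℕ) (T : Set (Set (Pt d))) (hT : IsTiling d T)
    (hadm : Admissible d (patternClassesOf d T))
    (hlr : LinearlyRepetitive d (patternClassesOf d T))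
    (R : ℝ) (hR : 0 ≤ R)
    (A : Set (Set (Pt d)) → Set (Pt d) → Set (Pt d) → ℝ)
    (hsym : ∀ S ∈ TilingsOf d (patternClassesOf d T), ∀ x ∈ S, ∀ y ∈ S,
      A S x y = A S y x)
    (hfin : ∀ S ∈ TilingsOf d (patternClassesOf d T), ∀ x ∈ S, ∀ y ∈ S,
      (∀ p ∈ x, ∀ q ∈ y, R ≤ dist p q) → A S x y = 0)
    (hinv : ∀ S ∈ TilingsOf d (patternClassesOf d T),
      ∀ S' ∈ TilingsOf d (patternClassesOf d T), ∀ x ∈ S, ∀ y ∈ S, ∀ t : Pt d,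
      ((fun p => p + t) '' x) ∈ S' → ((fun p => p + t) '' y) ∈ S' →
      patTrans d t (nbhdPattern d S x y R) =
        nbhdPattern d S' ((fun p => p + t) '' x) ((fun p => p + t) '' y) R →
      A S' ((fun p => p + t) '' x) ((fun p => p + t) '' y) = A S x y) :
    ∀ lam : ℝ, ∃ k : ℝ, ∀ ε : ℝ, 0 < ε → ∃ r' : ℝ, 0 < r' ∧
      ∀ S ∈ TilingsOf d (patternClassesOf d T), ∀ B : Set (Pt d),
        IsBox d B → r' ≤ widthOf d B → |idsVal d S A B lam - k| < ε := by
  intro lam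
  rcases Nat.eq_zero_or_pos d with hd | hd
  · subst hd
    refine ⟨0, fun ε _ => ⟨1, one_pos, fun S _ B _ hw => ?_⟩⟩
    exfalso
    simp only [widthOf, Real.iInf_of_isEmpty] at hw
    linarith
  obtain ⟨r0, rho, hr0, hrho, hgood⟩ := tiling_good d T hadm
  have hTT : T ∈ TilingsOf d (patternClassesOf d T) := by
    refine ⟨hT, fun M hM hMT => ⟨hM, 0, ?_⟩⟩
    simpa [patTrans] using hMT
  have hsys : ∀ S ∈ TilingsOf d (patternClassesOf d T), Sys d r0 rho R S (A S) :=
    fun S hS => ⟨hgood S hS, hsym S hS, hfin S hS⟩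
  obtain ⟨k, hk⟩ := limit_abs d hd {S // S ∈ TilingsOf d (patternClassesOf d T)} ⟨T, hTT⟩
    (fun S a b => NB d (A S.1) lam S.1 a b) (fun S a b => Nat.cast_nonneg _)
    (by
      intro eta heta
      obtain ⟨l0, hl0, m, hm, h⟩ := grid_ineq d r0 rho R hr0 hrho hR eta heta
      exact ⟨l0, hl0, m, hm, fun S a b o l hl hs => h S.1 (A S.1) lam (hsys S.1 S.2) a b o l hl hs⟩)
    (by
      obtain ⟨D, l0, hl0, h⟩ := bound_ineq d r0 rho R hr0 hrho hR
      exact ⟨D, l0, hl0, fun S a b hs => h S.1 (A S.1) lam (hsys S.1 S.2) a b hs⟩)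
    (by
      obtain ⟨K, hK, L1, hL1, h⟩ :=
        lr_step d hd T hlr R hR r0 rho hr0 hrho hgood A hsym hinv lam
      exact ⟨K, hK, L1, hL1, fun L hL S o S' a => h L hL S.1 S.2 o S'.1 S'.2 a⟩)
  refine ⟨k, fun ε hε => ?_⟩
  obtain ⟨r, hr, h⟩ := hk ε hε
  refine ⟨r, hr, ?_⟩
  rintro S hS B ⟨a, b, hab, rfl⟩ hw
  have := h ⟨S, hS⟩ a b (fun j => side_of_width d a b hab r hw j)
  rw [idsVal_eq, volOf_boxSet d a b fun j => (hab j).le]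
  exact this

end
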